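/- arXiv:2301.03417 — 9 statements merged into one kernel-verified Lean document; each statement's English description precedes it below -/
import Mathlib

section
/- Let G⃗ = (V, A) be an oriented graph. If G⃗ is 2-freezable, then |A| ≥ 2|V|. -/
/-- A relation (digraph) is acyclic if no vertex lies on a directed cycle. -/
def RelAcyclic {V : Type} (r : V → V → Prop) : Prop :=
  ∀ v, ¬ Relation.TransGen r v v

/-- `α` is a `k`-dicolouring of the digraph `D`: each colour class induces
an acyclic subdigraph. -/
def IsDicolouring {V : Type} (D : V → V → Prop) (k : ℕ) (α : V → Fin k) : Prop :=
  ∀ c : Fin k, RelAcyclic (fun u v => D u v ∧ α u = c ∧ α v = c)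

/-- Two colourings differ on exactly one vertex. -/
def RecolAdj {V : Type} {k : ℕ} (α β : V → Fin k) : Prop :=
  ∃ v, α v ≠ β v ∧ ∀ w, w ≠ v → α w = β w

/-- A single edge of the `k`-dicolouring graph `D_k(D)`. -/
def RecolStep {V : Type} (D : V → V → Prop) (k : ℕ) (α β : V → Fin k) : Prop :=
  IsDicolouring D k α ∧ IsDicolouring D k β ∧ RecolAdj α β

/-- The digraph `D` is `k`-mixing: the `k`-dicolouring graph is connected. -/
def Mixing {V : Type} (D : V → V → Prop) (k : ℕ) : Prop :=
  ∀ α β : V → Fin k, IsDicolouring D k α → IsDicolouring D k β →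
    Relation.ReflTransGen (RecolStep D k) α β

/-- Out-degree of `v` in the subdigraph of `D` induced by `S`. -/
noncomputable def outDegOn {V : Type} (D : V → V → Prop) (S : Set V) (v : V) : ℕ :=
  {w ∈ S | D v w}.ncard

/-- In-degree of `v` in the subdigraph of `D` induced by `S`. -/
noncomputable def inDegOn {V : Type} (D : V → V → Prop) (S : Set V) (v : V) : ℕ :=
  {w ∈ S | D w v}.ncard

/-- An oriented graph: a digraph with no digon (hence also no loop). -/
def Oriented {V : Type} (D : V → V → Prop) : Prop :=
  ∀ u v, D u v → ¬ D v u

/-- A walk of length `m` in the `k`-dicolouring graph (a redicolouring sequence):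
consecutive dicolourings differ on exactly one vertex. -/
def RecolWalk {V : Type} (D : V → V → Prop) (k m : ℕ) (γ : ℕ → V → Fin k) : Prop :=
  (∀ i ≤ m, IsDicolouring D k (γ i)) ∧ ∀ i < m, RecolAdj (γ i) (γ (i + 1))

/-- A frozen `k`-dicolouring: no single vertex can be recoloured so as to
yield another `k`-dicolouring. -/
def FrozenDicolouring {V : Type} [DecidableEq V] (D : V → V → Prop) (k : ℕ)
    (α : V → Fin k) : Prop :=
  IsDicolouring D k α ∧
    ∀ (v : V) (c : Fin k), c ≠ α v → ¬ IsDicolouring D k (Function.update α v c)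

/-- The arc set of a digraph, as a set of ordered pairs. -/
def arcSet {V : Type} (D : V → V → Prop) : Set (V × V) := {p | D p.1 p.2}

/-- The arcs of `D` lying inside a set `S` of vertices. -/
def arcSetOn {V : Type} (D : V → V → Prop) (S : Set V) : Set (V × V) :=
  {p | p.1 ∈ S ∧ p.2 ∈ S ∧ D p.1 p.2}

theorem tg_split {V : Type} (r : V → V → Prop) (v x y : V) (h : Relation.TransGen r x y) :
    Relation.TransGen (fun a b => r a b ∧ a ≠ v ∧ b ≠ v) x y ∨
      (Relation.ReflTransGen r x v ∧ Relation.ReflTransGen r v y) := by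
  induction h with
  | single h =>
    rename_i b
    by_cases hx : x = v
    · subst hx
      exact Or.inr ⟨.refl, .single h⟩
    by_cases hb : b = v
    · subst hb
      exact Or.inr ⟨.single h, .refl⟩
    exact Or.inl (.single ⟨h, hx, hb⟩)
  | tail hab h ih =>
    rename_i b c
    rcases ih with ih | ⟨h1, h2⟩
    · by_cases hb : b = v
      · subst hb
        exact Or.inr ⟨hab.to_reflTransGen, .single h⟩
      by_cases hc : c = v
      · subst hc
        exact Or.inr ⟨hab.to_reflTransGen.tail h, .refl⟩
      exact Or.inl (ih.tail ⟨h, hb, hc⟩)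
    · exact Or.inr ⟨h1, h2.tail h⟩

theorem frozen_cycle {V : Type} [DecidableEq V]
    (D : V → V → Prop) (ho : Oriented D) (α : V → Fin 2) (hf : FrozenDicolouring D 2 α)
    (v : V) (c : Fin 2) (hc : c ≠ α v) :
    (∃ w, D v w ∧ α w = c ∧ ∃ u, D w u ∧ α u = c) ∧ ∃ u, D u v ∧ α u = c := by
  have hne : ∀ a b, D a b → a ≠ b := by
    rintro a b h rfl
    exact ho _ _ h h
  have key : ∀ w, w ≠ v → ∀ c', Function.update α v c w = c' → α w = c' := by
    intro w hw c' h
    rwa [Function.update_of_ne hw] at h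
  have h := hf.2 v c hc
  unfold IsDicolouring RelAcyclic at h
  push Not at h
  obtain ⟨c', x, hx⟩ := h
  have hv : Relation.TransGen (fun a b => D a b ∧ Function.update α v c a = c' ∧
      Function.update α v c b = c') v v := by
    rcases tg_split _ v x x hx with h | ⟨h1, h2⟩
    · refine absurd ?_ (hf.1 c' x)
      refine Relation.TransGen.mono ?_ x x h
      exact fun a b hab => ⟨hab.1.1, key a hab.2.1 _ hab.1.2.1, key b hab.2.2 _ hab.1.2.2⟩
    · exact (Relation.TransGen.trans_right h2 hx).trans_left h1
  have hcc : c' = c := by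
    obtain ⟨w, hw, _⟩ := Relation.TransGen.head'_iff.1 hv
    simpa using hw.2.1.symm
  subst hcc
  constructor
  · obtain ⟨w, hw, hwv⟩ := Relation.TransGen.head'_iff.1 hv
    have hwn : w ≠ v := (hne _ _ hw.1).symm
    refine ⟨w, hw.1, key w hwn _ hw.2.2, ?_⟩
    rcases Relation.ReflTransGen.cases_head hwv with h | ⟨u, hu, _⟩
    · exact absurd h hwn
    · refine ⟨u, hu.1, key u ?_ _ hu.2.2⟩
      rintro rfl
      exact ho _ _ hw.1 hu.1
  · obtain ⟨u, _, hu⟩ := Relation.TransGen.tail'_iff.1 hv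
    exact ⟨u, hu.1, key u (hne _ _ hu.1) _ hu.2.1⟩

/-- If an oriented graph is `2`-freezable, then it has at least `2 |V|` arcs. -/
theorem two_freezable_density {V : Type} [Fintype V] [DecidableEq V]
    (D : V → V → Prop) (horiented : Oriented D)
    (hfreeze : ∃ α : V → Fin 2, FrozenDicolouring D 2 α) :
    2 * Fintype.card V ≤ (arcSet D).ncard := by
  obtain ⟨α, hf⟩ := hfreeze
  have key := frozen_cycle D horiented α hf
  have hex : ∀ q : V × Fin 2, ∃ p : V × V, D p.1 p.2 ∧ α p.2 = q.2 ∧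
      ((p.1 = q.1 ∧ ((q.2 ≠ α q.1 ∧ ∃ u, D p.2 u ∧ α u = q.2) ∨ q.2 = α q.1)) ∨
       (p.2 = q.1 ∧ α p.1 ≠ q.2 ∧ q.2 = α q.1 ∧ ¬ ∃ u, D p.2 u ∧ α u = q.2)) := by
    rintro ⟨v, c⟩
    by_cases hc : c = α v
    · by_cases hs : ∃ u, D v u ∧ α u = c
      · obtain ⟨u, hu, huc⟩ := hs
        exact ⟨(v, u), hu, huc, Or.inl ⟨rfl, Or.inr hc⟩⟩
      · obtain ⟨d, hd⟩ : ∃ d : Fin 2, d ≠ α v := exists_ne _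
        obtain ⟨u, hu, hud⟩ := (key v d hd).2
        refine ⟨(u, v), hu, hc.symm, Or.inr ⟨rfl, ?_, hc, hs⟩⟩
        simp only
        rw [hud, hc]
        exact hd
    · obtain ⟨w, h1, h2, h3⟩ := (key v c hc).1
      exact ⟨(v, w), h1, h2, Or.inl ⟨rfl, Or.inl ⟨hc, h3⟩⟩⟩
  choose f hf1 hf2 hf3 using hex
  have hinj : Function.Injective f := by
    intro q q' h
    have e2 : q.2 = q'.2 := by rw [← hf2 q, ← hf2 q', h]
    have a := hf3 q
    have b := hf3 q'
    rw [← h, ← e2] at b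
    refine Prod.ext ?_ e2
    grind
  have : (Set.range f).ncard ≤ (arcSet D).ncard := by
    apply Set.ncard_le_ncard _ (Set.toFinite _)
    rintro _ ⟨q, rfl⟩
    exact hf1 q
  rw [← Set.image_univ, Set.ncard_image_of_injective _ hinj, Set.ncard_univ] at this
  simp at this
  omega
end

section
/- Let G⃗ be an oriented graph. If G⃗ is not 2-mixing, then Mad(G⃗) ≥ 7/2. -/
open Relation Function
open scoped Classical

namespace RD

theorem f2a (a b : Fin 2) (h : a ≠ b) : a = b + 1 := by revert a b; decide
theorem f2b (a : Fin 2) : a + 1 ≠ a := by revert a; decide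
theorem f2c (a : Fin 2) : a + 1 + 1 = a := by revert a; decide
theorem f2d (a b c : Fin 2) (h : a ≠ b) (h' : b ≠ c) : a = c := by revert a b c; decide
theorem f2e (a b : Fin 2) (h : a + 1 = b + 1) : a = b := by revert a b; decide
theorem f2f (a b : Fin 2) (h : a ≠ b + 1) : a = b := by revert a b; decide

def Mono {V : Type} (E : V → V → Prop) (β : V → Fin 2) (u v : V) : Prop := E u v ∧ β u = β v
def Val {V : Type} (E : V → V → Prop) (β : V → Fin 2) : Prop := RelAcyclic (Mono E β)
def rs {V : Type} (E : V → V → Prop) (X : Set V) (u v : V) : Prop := E u v ∧ u ∉ X ∧ v ∉ X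
def Conn {V : Type} (E : V → V → Prop) : (V → Fin 2) → (V → Fin 2) → Prop :=
  ReflTransGen (RecolStep E 2)
def fE {V : Type} (E : V → V → Prop) (u v : V) : Prop := E v u

variable {V : Type} {E : V → V → Prop}

theorem tgm {r q : V → V → Prop} {a b : V} (h : TransGen r a b) (hrq : ∀ x y, r x y → q x y) :
    TransGen q a b := by
  induction h with
  | single h => exact .single (hrq _ _ h)
  | tail _ h ih => exact ih.tail (hrq _ _ h)

theorem isDi_iff (β : V → Fin 2) : IsDicolouring E 2 β ↔ Val E β := by
  constructor
  · intro h v hv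
    have key : ∀ w, TransGen (Mono E β) v w →
        TransGen (fun a b => E a b ∧ β a = β v ∧ β b = β v) v w ∧ β w = β v := by
      intro w hw
      induction hw with
      | single h => exact ⟨.single ⟨h.1, rfl, h.2.symm⟩, h.2.symm⟩
      | tail _ h ih => exact ⟨ih.1.tail ⟨h.1, ih.2, h.2.symm.trans ih.2⟩, h.2.symm.trans ih.2⟩
    exact h (β v) v (key v hv).1
  · intro h c v hv
    refine h v (tgm hv ?_)
    intro a b hab
    exact ⟨hab.1, hab.2.1.trans hab.2.2.symm⟩

theorem cyc_out {r : V → V → Prop} {v : V} (h : TransGen r v v) : ∃ y, r v y ∧ TransGen r y y := by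
  obtain ⟨y, h1, h2⟩ := TransGen.head'_iff.1 h
  exact ⟨y, h1, TransGen.tail' h2 h1⟩

theorem cyc_in {r : V → V → Prop} {v : V} (h : TransGen r v v) : ∃ y, r y v ∧ TransGen r y y := by
  obtain ⟨y, h1, h2⟩ := TransGen.tail'_iff.1 h
  exact ⟨y, h2, TransGen.head' h2 h1⟩

theorem cyc_restrict {r : V → V → Prop} {Q : V → Prop} (hQ : ∀ x, TransGen r x x → Q x) {v : V}
    (h : TransGen r v v) : TransGen (fun a b => r a b ∧ Q a ∧ Q b) v v := by
  have key : ∀ w, TransGen r v w → TransGen r w v →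
      TransGen (fun a b => r a b ∧ Q a ∧ Q b) v w := by
    intro w hw
    induction hw with
    | single h1 =>
      intro h2
      exact .single ⟨h1, hQ _ (.head h1 h2), hQ _ (h2.tail h1)⟩
    | tail h0 h1 ih =>
      intro h2
      exact (ih (.head h1 h2)).tail ⟨h1, hQ _ ((TransGen.head h1 h2).trans h0), hQ _ ((h2.trans h0).tail h1)⟩
  exact key v h h

theorem conn_symm {α β : V → Fin 2} (h : Conn E α β) : Conn E β α := by
  have : Std.Symm (RecolStep E 2) := by
    constructor
    rintro a b ⟨h1, h2, v, h3, h4⟩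
    exact ⟨h2, h1, v, h3.symm, fun w hw => (h4 w hw).symm⟩
  exact ReflTransGen.stdSymm.symm _ _ h

theorem conn_trans {α β γ : V → Fin 2} (h : Conn E α β) (h' : Conn E β γ) : Conn E α γ :=
  ReflTransGen.trans h h'

theorem conn_val {α β : V → Fin 2} (h : Conn E α β) (ha : Val E α) : Val E β := by
  induction h with
  | refl => exact ha
  | tail _ h _ => exact (isDi_iff _).1 h.2.1

theorem conn_of_interval [Fintype V] {α β : V → Fin 2}
    (h : ∀ δ : V → Fin 2, (∀ x, δ x = α x ∨ δ x = β x) → Val E δ) : Conn E α β := by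
  have key : ∀ F : Finset V, Conn E α (fun x => if x ∈ F then β x else α x) := by
    intro F
    induction F using Finset.induction_on with
    | empty => simp; exact ReflTransGen.refl
    | insert a F ha ih =>
      by_cases hab : α a = β a
      · have : (fun x => if x ∈ insert a F then β x else α x) = (fun x => if x ∈ F then β x else α x) := by
          funext x
          by_cases hx : x = a
          · subst hx; simp [hab]
          · simp [hx]
        rw [this]; exact ih
      · refine ReflTransGen.tail ih ⟨(isDi_iff _).2 (h _ ?_), (isDi_iff _).2 (h _ ?_), a, ?_, ?_⟩
        · intro x; split_ifs <;> simp
        · intro x; split_ifs <;> simp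
        · simpa [ha] using hab
        · intro w hw; simp [hw]
  have := key Finset.univ
  simpa using this

theorem conn_of_one [Fintype V] {α β : V → Fin 2} (s : V) (h : ∀ x, x ≠ s → β x = α x)
    (ha : Val E α) (hb : Val E β) : Conn E α β := by
  apply conn_of_interval
  intro δ hd
  rcases hd s with h1 | h1
  · have : δ = α := by
      funext x
      by_cases hx : x = s
      · rw [hx, h1]
      · rcases hd x with h2 | h2
        · exact h2
        · rw [h2, h x hx]
    rwa [this]
  · have : δ = β := by
      funext x
      by_cases hx : x = s
      · rw [hx, h1]
      · rcases hd x with h2 | h2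
        · rw [h2, h x hx]
        · exact h2
    rwa [this]

theorem val_congr {X : Set V} {δ δ' : V → Fin 2} (h : ∀ x, x ∉ X → δ' x = δ x)
    (hv : Val (rs E X) δ) : Val (rs E X) δ' := by
  intro v hvv
  refine hv v (tgm hvv ?_)
  rintro a b ⟨⟨h1, h2, h3⟩, h4⟩
  exact ⟨⟨h1, h2, h3⟩, by rw [← h a h2, ← h b h3, h4]⟩

theorem val_rs {X : Set V} {δ : V → Fin 2} (hv : Val E δ) : Val (rs E X) δ := by
  intro v hvv
  exact hv v (tgm hvv fun a b h => ⟨h.1.1, h.2⟩)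

theorem val_of_rs {X : Set V} {δ : V → Fin 2} (hv : Val (rs E X) δ)
    (h : ∀ x, TransGen (Mono E δ) x x → x ∉ X) : Val E δ := by
  intro v hvv
  refine hv v (tgm (cyc_restrict h hvv) ?_)
  rintro a b ⟨h1, h2, h3⟩
  exact ⟨⟨h1.1, h2, h3⟩, h1.2⟩

/-- colour swap -/
def sw (δ : V → Fin 2) : V → Fin 2 := fun x => δ x + 1

theorem val_sw {δ : V → Fin 2} (h : Val E δ) : Val E (sw δ) := by
  intro v hv
  exact h v (tgm hv fun a b hab => ⟨hab.1, f2e _ _ hab.2⟩)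

theorem conn_sw {α β : V → Fin 2} (h : Conn E α β) : Conn E (sw α) (sw β) := by
  induction h with
  | refl => exact .refl
  | tail _ h ih =>
    refine ih.tail ?_
    obtain ⟨h1, h2, v, h3, h4⟩ := h
    refine ⟨(isDi_iff _).2 (val_sw ((isDi_iff _).1 h1)), (isDi_iff _).2 (val_sw ((isDi_iff _).1 h2)), v, ?_, ?_⟩
    · intro h5; exact h3 (f2e _ _ h5)
    · intro w hw; simp [sw, h4 w hw]

theorem val_fE (δ : V → Fin 2) : Val (fE E) δ ↔ Val E δ := by
  have : ∀ v, TransGen (Mono (fE E) δ) v v ↔ TransGen (Mono E δ) v v := by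
    intro v
    rw [← transGen_swap (r := Mono E δ)]
    have : Mono (fE E) δ = swap (Mono E δ) := by
      funext a b; simp [Mono, fE, swap, eq_comm]
    rw [this]
  simp [Val, RelAcyclic, this]

theorem conn_fE (α β : V → Fin 2) : Conn (fE E) α β ↔ Conn E α β := by
  have : RecolStep (fE E) 2 = RecolStep E 2 := by
    funext a b; simp [RecolStep, isDi_iff, val_fE]
  simp [Conn, this]

theorem mixing_iff : Mixing E 2 ↔ ∀ α β, Val E α → Val E β → Conn E α β := by
  simp [Mixing, isDi_iff, Conn]

theorem mixing_fE : Mixing (fE E) 2 ↔ Mixing E 2 := by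
  simp [mixing_iff, val_fE, conn_fE]

/-- lifting -/
theorem lift [Fintype V] {X : Set V} (Good : (V → Fin 2) → Prop) (hm : Mixing (rs E X) 2)
    (h : ∀ δ, Val E δ → Good δ → ∀ δ₁ : V → Fin 2, ∀ x, x ∉ X → (∀ y, y ≠ x → δ₁ y = δ y) →
      Val (rs E X) δ₁ → ∃ δ', Conn E δ δ' ∧ Good δ' ∧ ∀ y, y ∉ X → δ' y = δ₁ y)
    (δ : V → Fin 2) (hδ : Val E δ) (hg : Good δ) (γ : V → Fin 2) (hγ : Val (rs E X) γ) :
    ∃ δ', Conn E δ δ' ∧ Good δ' ∧ ∀ y, y ∉ X → δ' y = γ y := by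
  have hc := mixing_iff.1 hm δ γ (val_rs hδ) hγ
  clear hγ
  induction hc with
  | refl => exact ⟨δ, .refl, hg, fun _ _ => rfl⟩
  | @tail γ₁ γ₂ h1 h2 ih =>
    obtain ⟨δ', hc, hg', he⟩ := ih
    obtain ⟨_, h4, x, h5, h6⟩ := h2
    by_cases hx : x ∈ X
    · refine ⟨δ', hc, hg', fun y hy => ?_⟩
      rw [he y hy, h6 y (fun h => hy (h ▸ hx))]
    · have hv := (isDi_iff _).1 h4
      obtain ⟨δ'', hc2, hg2, he2⟩ := h δ' (conn_val hc hδ) hg' (fun y => if y = x then γ₂ y else δ' y) x hx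
        (fun y hy => by simp [hy]) (val_congr (fun y hy => by
          try dsimp only
          split_ifs with hyx
          · rfl
          · rw [he y hy, h6 y hyx]) hv)
      refine ⟨δ'', conn_trans hc hc2, hg2, fun y hy => ?_⟩
      rw [he2 y hy]
      split_ifs with hyx
      · rfl
      · rw [he y hy, h6 y hyx]

theorem exists_rel {X : Set V} (hm : Mixing (rs E X) 2) {y₁ y₂ : V} (hne : y₁ ≠ y₂)
    (γ : V → Fin 2) (hγ : Val (rs E X) γ) (d : Fin 2) :
    ∃ γ, Val (rs E X) γ ∧ γ y₂ = γ y₁ + d := by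
  by_contra hcon
  push Not at hcon
  have hc := mixing_iff.1 hm γ (sw γ) hγ (val_sw hγ)
  have key : ∀ β, Conn (rs E X) γ β → β y₁ = γ y₁ := by
    intro β hb
    induction hb with
    | refl => rfl
    | @tail γ₁ γ₂ h1 h2 ih =>
      obtain ⟨h3, h4, x, h5, h6⟩ := h2
      have a1 := hcon _ ((isDi_iff _).1 h3)
      have a2 := hcon _ ((isDi_iff _).1 h4)
      rw [← ih]
      by_cases hx : y₁ = x
      · subst hx
        rw [← h6 y₂ hne.symm] at a2
        exfalso
        clear hcon
        revert a1 a2 h5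
        generalize γ₁ y₁ = p
        generalize γ₁ y₂ = q
        generalize γ₂ y₁ = r
        revert p q r d; decide
      · exact (h6 _ hx).symm
  have := key _ hc
  exact f2b _ this


def InP (E : V → V → Prop) (s p : V) : Prop := E p s ∧ ∀ y, E p y → y = s
def OutP (E : V → V → Prop) (s p : V) : Prop := E s p ∧ ∀ y, E y p → y = s
def PX (E : V → V → Prop) (s : V) : Set V := {x | x = s ∨ InP E s x ∨ OutP E s x}
def RI (E : V → V → Prop) (s x : V) : Prop := E x s ∧ ¬ InP E s x
def RO (E : V → V → Prop) (s x : V) : Prop := E s x ∧ ¬ OutP E s x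
def Nm (E : V → V → Prop) (s : V) (δ : V → Fin 2) : Prop :=
  ∀ p, InP E s p ∨ OutP E s p → δ p ≠ δ s
noncomputable def nm (E : V → V → Prop) (s : V) (δ : V → Fin 2) : V → Fin 2 :=
  fun x => if InP E s x ∨ OutP E s x then δ s + 1 else δ x
noncomputable def fl (E : V → V → Prop) (s : V) (δ : V → Fin 2) : V → Fin 2 :=
  fun x => if x ∈ PX E s then δ x + 1 else δ x

theorem or_irr (ho : Oriented E) (x : V) : ¬ E x x := fun h => ho x x h h

theorem valV {s : V} {δ : V → Fin 2} (hv : Val (rs E (PX E s)) δ)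
    (h : (∀ y, E s y → δ y ≠ δ s) ∨ (∀ y, E y s → δ y ≠ δ s)) : Val E δ := by
  have hs : ¬ TransGen (Mono E δ) s s := by
    intro hc
    rcases h with h | h
    · obtain ⟨y, h1, _⟩ := cyc_out hc
      exact h y h1.1 h1.2.symm
    · obtain ⟨y, h1, _⟩ := cyc_in hc
      exact h y h1.1 h1.2
  refine val_of_rs hv ?_
  rintro x hx (h1 | h1 | h1)
  · exact hs (h1 ▸ hx)
  · obtain ⟨y, h2, h3⟩ := cyc_out hx
    exact hs (h1.2 y h2.1 ▸ h3)
  · obtain ⟨y, h2, h3⟩ := cyc_in hx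
    exact hs (h1.2 y h2.1 ▸ h3)

theorem valR {s : V} {δ : V → Fin 2} (hv : Val (rs E (PX E s)) δ) (hn : Nm E s δ)
    (h : (∀ y, RO E s y → δ y ≠ δ s) ∨ (∀ y, RI E s y → δ y ≠ δ s)) : Val E δ := by
  refine valV hv ?_
  rcases h with h | h
  · left
    intro y hy
    by_cases hp : OutP E s y
    · exact hn y (Or.inr hp)
    · exact h y ⟨hy, hp⟩
  · right
    intro y hy
    by_cases hp : InP E s y
    · exact hn y (Or.inl hp)
    · exact h y ⟨hy, hp⟩

theorem nm_val (ho : Oriented E) {s : V} {δ δ' : V → Fin 2} (hv : Val E δ)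
    (h : ∀ x, δ' x = δ x ∨ δ' x = nm E s δ x) : Val E δ' := by
  have hss : δ' s = δ s := by
    rcases h s with h1 | h1
    · exact h1
    · rw [h1]; simp [nm, InP, OutP, or_irr ho]
  have hQ : ∀ x, TransGen (Mono E δ') x x → δ' x = δ x := by
    intro x hx
    rcases h x with h1 | h1
    · exact h1
    · unfold nm at h1
      split_ifs at h1 with hp
      · exfalso
        have : δ' x = δ' s := by
          rcases hp with hp | hp
          · obtain ⟨y, h2, h3⟩ := cyc_out hx
            rw [← hp.2 y h2.1]; exact h2.2
          · obtain ⟨y, h2, h3⟩ := cyc_in hx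
            rw [← hp.2 y h2.1]; exact h2.2.symm
        rw [this, hss] at h1
        exact f2b _ h1.symm
      · exact h1
  intro v hvv
  refine hv v (tgm (cyc_restrict hQ hvv) ?_)
  rintro a b ⟨h1, h2, h3⟩
  exact ⟨h1.1, by rw [← h2, ← h3, h1.2]⟩

theorem nm_nm (ho : Oriented E) (s : V) (δ : V → Fin 2) : Nm E s (nm E s δ) := by
  intro p hp
  have : nm E s δ s = δ s := by simp [nm, InP, OutP, or_irr ho]
  rw [this]
  simp [nm, hp]

theorem nm_off (ho : Oriented E) {s : V} (δ : V → Fin 2) {x : V}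
    (h : ¬ (InP E s x ∨ OutP E s x)) : nm E s δ x = δ x := by simp [nm, h]

theorem nm_s (ho : Oriented E) {s : V} (δ : V → Fin 2) : nm E s δ s = δ s := by
  simp [nm, InP, OutP, or_irr ho]

theorem nm_conn [Fintype V] (ho : Oriented E) {s : V} {δ : V → Fin 2} (hv : Val E δ) :
    Conn E δ (nm E s δ) :=
  conn_of_interval fun _ h => nm_val ho hv h

theorem flip1 [Fintype V] (ho : Oriented E) {s : V} {δ : V → Fin 2} (hv : Val E δ) (hn : Nm E s δ)
    (h1 : ∀ x, RO E s x → δ x ≠ δ s) (h2 : ∀ x, RI E s x → δ x = δ s) : Conn E δ (fl E s δ) := by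
  have hs : ¬ InP E s s ∧ ¬ OutP E s s := by simp [InP, OutP, or_irr ho]
  have hio : ∀ x, InP E s x → ¬ OutP E s x := fun x h h' => ho _ _ h.1 h'.1
  have hoi : ∀ x, E x s → ¬ OutP E s x := fun x h h' => ho _ _ h h'.1
  have hoo : ∀ x, E s x → ¬ InP E s x := fun x h h' => ho _ _ h h'.1
  have hxs : ∀ x, E s x → x ≠ s := fun x h h' => or_irr ho s (h' ▸ h)
  have hsx : ∀ x, E x s → x ≠ s := fun x h h' => or_irr ho s (h' ▸ h)
  have hout : ∀ x, E s x → δ x = δ s + 1 := by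
    intro x hx
    by_cases hp : OutP E s x
    · exact f2a _ _ (hn x (Or.inr hp))
    · exact f2a _ _ (h1 x ⟨hx, hp⟩)
  have hin : ∀ x, E x s → ¬ InP E s x → δ x = δ s := fun x h h' => h2 x ⟨h, h'⟩
  have hinp : ∀ x, InP E s x → δ x = δ s + 1 := fun x h => f2a _ _ (hn x (Or.inl h))
  set a1 : V → Fin 2 := fun x => if InP E s x then δ s else δ x with ha1
  set a2 : V → Fin 2 := fun x => if x = s then δ s + 1 else a1 x with ha2
  have a1s : a1 s = δ s := by simp [ha1]
  have a2s : a2 s = δ s + 1 := by simp [ha2]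
  have fls : fl E s δ s = δ s + 1 := by simp [fl, PX]
  have v0 := val_rs (X := PX E s) hv
  have off1 : ∀ x, x ∉ PX E s → a1 x = δ x := by
    intro x hx
    have : ¬ InP E s x := fun h => hx (Or.inr (Or.inl h))
    simp [ha1, this]
  have off2 : ∀ x, x ∉ PX E s → a2 x = δ x := by
    intro x hx
    have : x ≠ s := fun h => hx (Or.inl h)
    rw [← off1 x hx]
    simp [ha2, this]
  have off3 : ∀ x, x ∉ PX E s → fl E s δ x = δ x := by
    intro x hx
    simp [fl, hx]
  refine conn_trans (β := a1) ?_ (conn_trans (β := a2) ?_ ?_)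
  · refine conn_of_interval fun μ hμ => valV (s := s) (val_congr (fun x hx => ?_) v0) (Or.inl ?_)
    · have := hμ x
      rw [off1 x hx] at this
      simpa using this
    · intro y hy
      have e1 : μ s = δ s := by simpa [a1s] using hμ s
      have e2 : μ y = δ y := by
        have := hμ y
        simpa [ha1, hoo y hy] using this
      rw [e1, e2, hout y hy]; exact f2b _
  · refine conn_of_one s (fun x hx => by simp [ha2, hx]) ?_ ?_
    · refine valV (s := s) (val_congr off1 v0) (Or.inl ?_)
      intro y hy
      rw [a1s]
      simp only [ha1, hoo y hy, if_false, hout y hy]; exact f2b _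
    · refine valV (s := s) (val_congr off2 v0) (Or.inr ?_)
      intro y hy
      rw [a2s]
      simp only [ha2, hsx y hy, if_false, ha1]
      split_ifs with h
      · exact (f2b _).symm
      · rw [hin y hy h]; exact (f2b _).symm
  · refine conn_of_interval fun μ hμ => valV (s := s) (val_congr (fun x hx => ?_) v0) (Or.inr ?_)
    · have := hμ x
      rw [off2 x hx, off3 x hx] at this
      simpa using this
    · intro y hy
      have e1 : μ s = δ s + 1 := by simpa [a2s, fls] using hμ s
      have e2 : μ y = δ s := by
        have := hμ y
        simp only [ha2, ha1, hsx y hy, if_false] at this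
        unfold fl at this
        simp only [PX, Set.mem_setOf_eq, hsx y hy, hoi y hy, false_or, or_false] at this
        split_ifs at this with h
        · rw [hinp y h, f2c] at this; simpa using this
        · rw [hin y hy h] at this; simpa using this
      rw [e1, e2]; exact (f2b _).symm

theorem fl_fl (s : V) (δ : V → Fin 2) : fl E s (fl E s δ) = δ := by
  funext x
  simp only [fl]
  split_ifs
  · exact f2c _
  · rfl

theorem fl_off {s : V} (δ : V → Fin 2) {x : V} (h : x ∉ PX E s) : fl E s δ x = δ x := by
  simp [fl, h]
theorem fl_on {s : V} (δ : V → Fin 2) {x : V} (h : x ∈ PX E s) : fl E s δ x = δ x + 1 := by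
  simp [fl, h]
theorem fl_nm {s : V} {δ : V → Fin 2} (h : Nm E s δ) : Nm E s (fl E s δ) := by
  intro p hp
  rw [fl_on δ (Or.inr hp), fl_on δ (Or.inl rfl)]
  intro h'
  exact h p hp (f2e _ _ h')

theorem RO_off (ho : Oriented E) {s x : V} (h : RO E s x) : x ∉ PX E s := by
  rintro (h1 | h1 | h1)
  · exact or_irr ho s (by have := h.1; rwa [h1] at this)
  · exact ho _ _ h.1 h1.1
  · exact h.2 h1
theorem RI_off (ho : Oriented E) {s x : V} (h : RI E s x) : x ∉ PX E s := by
  rintro (h1 | h1 | h1)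
  · exact or_irr ho s (by have := h.1; rwa [h1] at this)
  · exact h.2 h1
  · exact ho _ _ h.1 h1.1

def Flippable (E : V → V → Prop) (s : V) (δ : V → Fin 2) : Prop :=
  ∃ c, (∀ x, RO E s x → δ x = c + 1) ∧ (∀ x, RI E s x → δ x = c)

theorem flip [Fintype V] (ho : Oriented E) {s : V} {δ : V → Fin 2} (hv : Val E δ) (hn : Nm E s δ)
    (h : Flippable E s δ) : Conn E δ (fl E s δ) := by
  obtain ⟨c, h1, h2⟩ := h
  by_cases hc : δ s = c
  · subst hc
    exact flip1 ho hv hn (fun x hx => by rw [h1 x hx]; exact f2b _) h2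
  · have hc' := f2a _ _ hc
    have hs : fl E s δ s = c := by rw [fl_on δ (Or.inl rfl), hc', f2c]
    have hv' : Val E (fl E s δ) := by
      refine valR (s := s) (val_congr (fun x hx => fl_off δ hx) (val_rs hv)) (fl_nm hn) (Or.inl ?_)
      intro y hy
      rw [fl_off δ (RO_off ho hy), hs, h1 y hy]; exact f2b _
    have := flip1 ho hv' (fl_nm hn) (fun x hx => by
      rw [fl_off δ (RO_off ho hx), hs, h1 x hx]; exact f2b _) (fun x hx => by
      rw [fl_off δ (RI_off ho hx), hs, h2 x hx])
    rw [fl_fl] at this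
    exact conn_symm this

theorem two_nm [Fintype V] (ho : Oriented E) {s : V} {δ δ' : V → Fin 2} (hv : Val E δ)
    (hn : Nm E s δ) (hn' : Nm E s δ') (h : Flippable E s δ) (he : ∀ x, x ∉ PX E s → δ' x = δ x) :
    Conn E δ δ' := by
  by_cases hs : δ' s = δ s
  · have : δ' = δ := by
      funext x
      by_cases hx : x ∈ PX E s
      · rcases hx with hx | hx
        · rw [hx, hs]
        · exact f2d _ _ _ (hn' x hx) (hs ▸ (hn x hx).symm)
      · exact he x hx
    rw [this]; exact .refl
  · have : δ' = fl E s δ := by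
      funext x
      by_cases hx : x ∈ PX E s
      · rw [fl_on δ hx]
        rcases hx with hx | hx
        · rw [hx]; exact f2a _ _ hs
        · apply f2a
          intro h3
          apply hs
          exact f2d _ _ _ (hn' x hx).symm (h3 ▸ hn x hx)
      · rw [he x hx, fl_off δ hx]
    rw [this]; exact flip ho hv hn h

/-- no out-neighbour -/
theorem sink_mixing [Fintype V] {s : V} (hs : ∀ y, ¬ E s y)
    (hm : Mixing (rs E {s}) 2) : Mixing E 2 := by
  have hval : ∀ δ, Val (rs E {s}) δ → Val E δ := by
    intro δ hd
    refine val_of_rs hd ?_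
    rintro x hx h
    obtain ⟨y, h1, _⟩ := cyc_out hx
    rw [Set.mem_singleton_iff] at h
    exact hs y (h ▸ h1.1)
  rw [mixing_iff]
  intro α β ha hb
  obtain ⟨δ, h1, _, h2⟩ := lift (fun _ => True) hm (by
    intro δ hd _ δ₁ x hx h1 h2
    exact ⟨δ₁, conn_of_one x h1 hd (hval _ h2), trivial, fun _ _ => rfl⟩) α ha trivial β (val_rs hb)
  refine conn_trans h1 (conn_of_one s (fun x hx => (h2 x hx).symm) (conn_val h1 ha) hb)

/-- never blocked -/
theorem A_mixing [Fintype V] (ho : Oriented E) {s : V} (hR : ∀ x, ¬ RI E s x)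
    (γ : V → Fin 2) (hγ : Val (rs E (PX E s)) γ) (hf : Flippable E s γ)
    (hm : Mixing (rs E (PX E s)) 2) : Mixing E 2 := by
  have hval : ∀ δ, Nm E s δ → Val (rs E (PX E s)) δ → Val E δ := fun δ h1 h2 =>
    valR h2 h1 (Or.inr fun y hy => absurd hy (hR y))
  have key : ∀ α, Val E α → ∃ δ, Conn E α δ ∧ Nm E s δ ∧ ∀ y, y ∉ PX E s → δ y = γ y := by
    intro α ha
    obtain ⟨δ, h1, h2⟩ := lift (Nm E s) hm (by
      intro δ hd hg δ₁ x hx h1 h2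
      have hn : Nm E s δ₁ := by
        intro p hp
        rw [h1 p (fun h => hx (h ▸ Or.inr hp)), h1 s (fun h => hx (h ▸ Or.inl rfl))]
        exact hg p hp
      exact ⟨δ₁, conn_of_one x h1 hd (hval _ hn h2), hn, fun _ _ => rfl⟩) (nm E s α)
      (conn_val (nm_conn ho ha) ha) (nm_nm ho s α) γ hγ
    exact ⟨δ, conn_trans (nm_conn ho ha) h1, h2⟩
  rw [mixing_iff]
  intro α β ha hb
  obtain ⟨δ, h1, h2, h3⟩ := key α ha
  obtain ⟨δ', h1', h2', h3'⟩ := key β hb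
  obtain ⟨c, h4, h5⟩ := hf
  refine conn_trans h1 (conn_trans ?_ (conn_symm h1'))
  refine two_nm ho (conn_val h1 ha) h2 h2' ⟨c, ?_, ?_⟩ (fun x hx => by rw [h3 x hx, h3' x hx])
  · intro x hx; rw [h3 x (RO_off ho hx)]; exact h4 x hx
  · intro x hx; rw [h3 x (RI_off ho hx)]; exact h5 x hx

/-- case B: `r → s → x` -/
theorem B_conn [Fintype V] (ho : Oriented E) {s r x : V} (hr : ∀ y, RI E s y ↔ y = r)
    (hx : ∀ y, RO E s y ↔ y = x) (hm : Mixing (rs E (PX E s)) 2)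
    {α β : V → Fin 2} (ha : Val E α) (hb : Val E β) (ha' : ¬ (α r = α s ∧ α x = α s))
    (hb' : ¬ (β r = β s ∧ β x = β s)) : Conn E α β := by
  have hr0 := (hr r).2 rfl
  have hx0 := (hx x).2 rfl
  have hrP := RI_off ho hr0
  have hxP := RO_off ho hx0
  have hrx : r ≠ x := by
    rintro rfl; exact ho _ _ hr0.1 hx0.1
  obtain ⟨γ, hγ, hγe⟩ := exists_rel hm hrx α (val_rs ha) 1
  have hflip : ∀ δ : V → Fin 2, δ r ≠ δ x → Flippable E s δ := by
    intro δ hd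
    refine ⟨δ r, ?_, ?_⟩
    · intro y hy; rw [(hx y).1 hy]; exact f2a _ _ hd.symm
    · intro y hy; rw [(hr y).1 hy]
  have hval : ∀ δ, Nm E s δ → ¬ (δ r = δ s ∧ δ x = δ s) → Val (rs E (PX E s)) δ → Val E δ := by
    intro δ h1 h2 h3
    refine valR h3 h1 ?_
    by_cases h4 : δ r = δ s
    · left
      intro y hy; rw [(hx y).1 hy]; exact fun h5 => h2 ⟨h4, h5⟩
    · right
      intro y hy; rw [(hr y).1 hy]; exact h4
  have key : ∀ α, Val E α → ¬ (α r = α s ∧ α x = α s) →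
      ∃ δ, Conn E α δ ∧ (Nm E s δ ∧ ¬ (δ r = δ s ∧ δ x = δ s)) ∧ ∀ y, y ∉ PX E s → δ y = γ y := by
    intro α ha hg0
    obtain ⟨δ, h1, h2⟩ := lift (fun δ => Nm E s δ ∧ ¬ (δ r = δ s ∧ δ x = δ s)) hm (by
      intro δ hd hg δ₁ z hz h1 h2
      have hP : ∀ p, p ∈ PX E s → δ₁ p = δ p := fun p hp => h1 p (fun h => hz (h ▸ hp))
      have hn : Nm E s δ₁ := by
        intro p hp
        rw [hP p (Or.inr hp), hP s (Or.inl rfl)]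
        exact hg.1 p hp
      by_cases hbl : δ₁ r = δ₁ s ∧ δ₁ x = δ₁ s
      · have hne : δ r ≠ δ x := by
          intro h3
          have e1 : δ₁ s = δ s := hP s (Or.inl rfl)
          by_cases h4 : z = r
          · have e2 := h1 x (by rw [h4]; exact hrx.symm)
            apply hg.2
            rw [h3, ← e1, ← e2]; exact ⟨hbl.2, hbl.2⟩
          · have e2 := h1 r (Ne.symm h4)
            apply hg.2
            rw [← h3, ← e1, ← e2]; exact ⟨hbl.1, hbl.1⟩
        have hc := flip ho hd hg.1 (hflip δ hne)
        have hn2 := fl_nm hn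
        have hg2 : ¬ (fl E s δ₁ r = fl E s δ₁ s ∧ fl E s δ₁ x = fl E s δ₁ s) := by
          rintro ⟨h5, -⟩
          rw [fl_off δ₁ hrP, fl_on δ₁ (Or.inl rfl), hbl.1] at h5
          exact f2b _ h5.symm
        refine ⟨fl E s δ₁, conn_trans hc (conn_of_one z ?_ (conn_val hc hd) ?_), ⟨hn2, hg2⟩, ?_⟩
        · intro y hy
          simp only [fl, h1 y hy]
        · exact hval _ hn2 hg2 (val_congr (fun y hy => fl_off δ₁ hy) h2)
        · intro y hy; exact fl_off δ₁ hy
      · exact ⟨δ₁, conn_of_one z h1 hd (hval _ hn hbl h2), ⟨hn, hbl⟩, fun _ _ => rfl⟩) (nm E s α)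
      (conn_val (nm_conn ho ha) ha) ⟨nm_nm ho s α, by
        rw [nm_s ho, nm_off ho _ (fun h => hrP (Or.inr h)), nm_off ho _ (fun h => hxP (Or.inr h))]
        exact hg0⟩ γ hγ
    exact ⟨δ, conn_trans (nm_conn ho ha) h1, h2⟩
  obtain ⟨δ, h1, h2, h3⟩ := key α ha ha'
  obtain ⟨δ', h1', h2', h3'⟩ := key β hb hb'
  refine conn_trans h1 (conn_trans ?_ (conn_symm h1'))
  refine two_nm ho (conn_val h1 ha) h2.1 h2'.1 (hflip δ ?_) (fun x hx => by rw [h3 x hx, h3' x hx])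
  rw [h3 r hrP, h3 x hxP, hγe]
  exact (f2b _).symm


structure MinC (E : V → V → Prop) (S : Finset V) : Prop where
  ho : Oriented E
  supp : ∀ u v, E u v → u ∈ S ∧ v ∈ S
  hmin : ∀ X : Set V, ∀ s ∈ S, s ∈ X → Mixing (rs E X) 2
  hnot : ¬ Mixing E 2

theorem MinC.fE {S : Finset V} (h : MinC E S) : MinC (fE E) S := by
  refine ⟨fun u v h1 h2 => h.ho _ _ h1 h2, fun u v h1 => (h.supp _ _ h1).symm, ?_, ?_⟩
  · intro X s hs hX
    have : rs (RD.fE E) X = RD.fE (rs E X) := by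
      funext a b; simp only [rs, RD.fE]; apply propext; tauto
    rw [this, mixing_fE]
    exact h.hmin X s hs hX
  · rw [mixing_fE]; exact h.hnot

def Bad (E : V → V → Prop) (α : V → Fin 2) : Prop := Val E α ∧ ¬ Conn E α (sw α)
def Frz (E : V → V → Prop) (α : V → Fin 2) (x : V) : Prop :=
  Bad E α ∧ ∀ δ, Conn E α δ → δ x = α x
def Nin (E : V → V → Prop) (α : V → Fin 2) (v t : V) : Prop :=
  Frz E α v ∧ (∃ w, InP E w v) ∧ ∃ u, (∀ y, E y v ↔ y = u ∨ y = t) ∧ Frz E α u ∧ Frz E α t ∧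
    α u = α v ∧ α t ≠ α v

theorem bad_fE (α : V → Fin 2) : Bad (fE E) α ↔ Bad E α := by simp [Bad, val_fE, conn_fE]
theorem frz_fE (α : V → Fin 2) (x : V) : Frz (fE E) α x ↔ Frz E α x := by
  simp [Frz, bad_fE, conn_fE]

theorem const_of_rel {α : V → Fin 2} {y₁ y₂ : V} (hne : y₁ ≠ y₂) (d : Fin 2)
    (h : ∀ δ, Conn E α δ → δ y₂ = δ y₁ + d) : ∀ δ, Conn E α δ → δ y₁ = α y₁ := by
  intro δ hd
  induction hd with
  | refl => rfl
  | @tail γ₁ γ₂ h1 h2 ih =>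
    have a1 := h _ h1
    have a2 := h _ (h1.tail h2)
    obtain ⟨h3, h4, x, h5, h6⟩ := h2
    rw [← ih]
    by_cases hx : y₁ = x
    · subst hx
      rw [← h6 y₂ hne.symm] at a2
      exfalso
      clear h
      revert a1 a2 h5
      generalize γ₁ y₁ = p
      generalize γ₁ y₂ = q
      generalize γ₂ y₁ = r
      revert p q r d; decide
    · exact (h6 _ hx).symm

theorem const_ne {α : V → Fin 2} {y₁ y₂ : V} (hne : y₁ ≠ y₂)
    (h : ∀ δ, Conn E α δ → δ y₁ ≠ δ y₂) : ∀ δ, Conn E α δ → δ y₁ = α y₁ :=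
  const_of_rel hne 1 (fun δ hd => f2a _ _ (h δ hd).symm)

theorem const_eq {α : V → Fin 2} {y₁ y₂ : V} (hne : y₁ ≠ y₂)
    (h : ∀ δ, Conn E α δ → δ y₁ = δ y₂) : ∀ δ, Conn E α δ → δ y₁ = α y₁ :=
  const_of_rel hne 0 (fun δ hd => by rw [h δ hd, add_zero])

/-- if recolouring `s` is impossible, there is a monochromatic cycle through `s`. -/
theorem upd_cyc {δ : V → Fin 2} {s : V} {c : Fin 2} (hv : Val E δ)
    (hn : ¬ Val E (update δ s c)) : TransGen (Mono E (update δ s c)) s s := by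
  by_contra h
  apply hn
  refine val_of_rs (X := {s}) (val_congr (δ := δ) ?_ (val_rs hv)) ?_
  · intro x hx
    exact update_of_ne hx _ _
  · rintro x hx rfl
    exact h hx

theorem upd_conn [Fintype V] {α δ : V → Fin 2} {s : V} {c : Fin 2} (ha : Val E α) (hc : Conn E α δ)
    (hn : Val E (update δ s c)) : Conn E α (update δ s c) :=
  conn_trans hc (conn_of_one s (fun _ hx => update_of_ne hx _ _) (conn_val hc ha) hn)

theorem frz_cyc [Fintype V] {α δ : V → Fin 2} {s : V} (hf : Frz E α s) (hc : Conn E α δ) :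
    TransGen (Mono E (update δ s (α s + 1))) s s := by
  apply upd_cyc (conn_val hc hf.1.1)
  intro hn
  have := hf.2 _ (upd_conn hf.1.1 hc hn)
  rw [update_self] at this
  exact f2b _ this

/-- frozen: opposite coloured in- and out-neighbours (and their continuation). -/
theorem frz_out [Fintype V] (ho : Oriented E) {α δ : V → Fin 2} {s : V} (hf : Frz E α s)
    (hc : Conn E α δ) : ∃ g y, E s g ∧ E g y ∧ y ≠ s ∧ δ g = α s + 1 ∧ δ y = α s + 1 := by
  obtain ⟨g, h1, h2⟩ := cyc_out (frz_cyc hf hc)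
  obtain ⟨y, h3, h4⟩ := cyc_out h2
  have hg : g ≠ s := fun h => or_irr ho s (by have := h1.1; rwa [h] at this)
  have hy : y ≠ s := fun h => ho _ _ h1.1 (by have := h3.1; rwa [h] at this)
  have e1 := h1.2
  rw [update_self, update_of_ne hg] at e1
  have e2 := h3.2
  rw [update_of_ne hy, update_of_ne hg] at e2
  exact ⟨g, y, h1.1, h3.1, hy, e1.symm, by rw [← e2, e1]⟩

theorem frz_in [Fintype V] (ho : Oriented E) {α δ : V → Fin 2} {s : V} (hf : Frz E α s)
    (hc : Conn E α δ) : ∃ g y, E g s ∧ E y g ∧ y ≠ s ∧ δ g = α s + 1 ∧ δ y = α s + 1 := by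
  have ho' : Oriented (fE E) := fun u v h1 h2 => ho _ _ h1 h2
  exact frz_out (E := fE E) ho' ((frz_fE _ _).2 hf) ((conn_fE _ _).2 hc)

theorem exists_val {S : Finset V} (h : MinC E S) : ∃ α, Val E α := by
  by_contra hc
  push Not at hc
  exact h.hnot (mixing_iff.2 fun α _ ha => absurd ha (hc α))

theorem C1 [Fintype V] {S : Finset V} (h : MinC E S) {s : V} (hs : s ∈ S) : ∃ y, E s y := by
  by_contra hc
  push Not at hc
  exact h.hnot (sink_mixing hc (h.hmin {s} s hs rfl))

theorem C2 [Fintype V] {S : Finset V} (h : MinC E S) {s : V} (hs : s ∈ S) (hR : ∀ x, ¬ RI E s x) :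
    3 ≤ (Finset.univ.filter (RO E s)).card := by
  by_contra hc
  have hm := h.hmin (PX E s) s hs (Or.inl rfl)
  obtain ⟨α, ha⟩ := exists_val h
  have : ∃ γ, Val (rs E (PX E s)) γ ∧ Flippable E s γ := by
    by_cases h2 : (Finset.univ.filter (RO E s)).card = 2
    · obtain ⟨y₁, y₂, hne, he⟩ := Finset.card_eq_two.1 h2
      obtain ⟨γ, h3, h4⟩ := exists_rel hm hne α (val_rs ha) 0
      rw [add_zero] at h4
      refine ⟨γ, h3, γ y₁ + 1, ?_, fun x hx => absurd hx (hR x)⟩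
      intro x hx
      have : x ∈ ({y₁, y₂} : Finset V) := by rw [← he]; simpa using hx
      rw [f2c]
      simp only [Finset.mem_insert, Finset.mem_singleton] at this
      rcases this with rfl | rfl
      · rfl
      · exact h4
    · have h3 : (Finset.univ.filter (RO E s)).card ≤ 1 := by omega
      rw [Finset.card_le_one] at h3
      by_cases h4 : ∃ x, RO E s x
      · obtain ⟨y, hy⟩ := h4
        refine ⟨α, val_rs ha, α y + 1, ?_, fun x hx => absurd hx (hR x)⟩
        intro x hx
        rw [f2c, h3 x (by simpa using hx) y (by simpa using hy)]
      · push Not at h4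
        exact ⟨α, val_rs ha, 0, fun x hx => absurd hx (h4 x), fun x hx => absurd hx (hR x)⟩
  obtain ⟨γ, h1, h2⟩ := this
  exact h.hnot (A_mixing h.ho hR γ h1 h2 hm)

theorem B_bad [Fintype V] {S : Finset V} (h : MinC E S) {s r x : V} (hs : s ∈ S)
    (hr : ∀ y, RI E s y ↔ y = r) (hx : ∀ y, RO E s y ↔ y = x)
    {α : V → Fin 2} (hb : Bad E α) {δ : V → Fin 2} (hc : Conn E α δ) : δ r = δ s ∧ δ x = δ s := by
  have hm := h.hmin (PX E s) s hs (Or.inl rfl)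
  by_contra hcon
  apply hb.2
  have hd := conn_val hc hb.1
  have := B_conn h.ho hr hx hm hd (val_sw hd) hcon (fun h' => hcon ⟨f2e _ _ h'.1, f2e _ _ h'.2⟩)
  exact conn_trans hc (conn_trans this (conn_symm (conn_sw hc)))

theorem B_exbad [Fintype V] {S : Finset V} (h : MinC E S) {s r x : V} (hs : s ∈ S)
    (hr : ∀ y, RI E s y ↔ y = r) (hx : ∀ y, RO E s y ↔ y = x) : ∃ α, Bad E α := by
  have hm := h.hmin (PX E s) s hs (Or.inl rfl)
  by_contra hcon
  apply h.hnot
  have hrs : s ≠ r := fun h' => or_irr h.ho s (by have := ((hr r).2 rfl).1; rwa [← h'] at this)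
  have key : ∀ α, Val E α → ∃ δ, Conn E α δ ∧ ¬ (δ r = δ s ∧ δ x = δ s) := by
    intro α ha
    by_contra hc
    push Not at hc
    apply hcon
    refine ⟨α, ha, fun h1 => ?_⟩
    have := const_eq hrs (fun δ hd => (hc δ hd).1.symm) _ h1
    exact f2b _ this
  rw [mixing_iff]
  intro α β ha hb
  obtain ⟨δ, h1, h2⟩ := key α ha
  obtain ⟨δ', h1', h2'⟩ := key β hb
  exact conn_trans h1 (conn_trans (B_conn h.ho hr hx hm (conn_val h1 ha) (conn_val h1' hb) h2 h2')
    (conn_symm h1'))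


theorem C3 [Fintype V] {S : Finset V} (h : MinC E S) {s r x : V} (hs : s ∈ S)
    (hr : ∀ y, RI E s y ↔ y = r) (hx : ∀ y, RO E s y ↔ y = x) : ∃ p, InP E s p := by
  by_contra hno
  push Not at hno
  obtain ⟨α, hb⟩ := B_exbad h hs hr hx
  have h1 := B_bad h hs hr hx hb .refl
  have hrs : r ≠ s := fun h' => or_irr h.ho s (by have := ((hr r).2 rfl).1; rwa [h'] at this)
  have hv : Val E (update α s (α s + 1)) := by
    by_contra hn
    obtain ⟨y, h2, _⟩ := cyc_in (upd_cyc hb.1 hn)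
    have hy := (hr y).1 ⟨h2.1, hno y⟩
    subst hy
    have := h2.2
    rw [update_self, update_of_ne hrs, h1.1] at this
    exact f2b _ this.symm
  have h2 := B_bad h hs hr hx hb (upd_conn hb.1 .refl hv)
  have := h2.1
  rw [update_self, update_of_ne hrs, h1.1] at this
  exact f2b _ this.symm

theorem mkN {α : V → Fin 2} {v w u₁ u₂ : V} (hf : Frz E α v) (hw : InP E w v) (hne : u₁ ≠ u₂)
    (hu : ∀ y, E y v ↔ y = u₁ ∨ y = u₂) (h : ∀ δ, Conn E α δ → δ u₁ ≠ δ u₂) :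
    ∃ t, Nin E α v t := by
  have f1 : Frz E α u₁ := ⟨hf.1, const_ne hne h⟩
  have f2 : Frz E α u₂ := ⟨hf.1, const_ne hne.symm (fun δ hd => (h δ hd).symm)⟩
  have h0 := h α .refl
  by_cases h1 : α u₁ = α v
  · exact ⟨u₂, hf, ⟨w, hw⟩, u₁, hu, f1, f2, h1, fun h' => h0 (h1.trans h'.symm)⟩
  · exact ⟨u₁, hf, ⟨w, hw⟩, u₂, fun y => (hu y).trans or_comm, f2, f1,
      f2d _ _ _ h0.symm h1, h1⟩

theorem sp_ne [Fintype V] {S : Finset V} (h : MinC E S) {s r x v z : V} (hs : s ∈ S)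
    (hr : ∀ y, RI E s y ↔ y = r) (hx : ∀ y, RO E s y ↔ y = x)
    (hv : ∀ y, InP E s y ↔ y = v) (hz : ∀ y, OutP E s y ↔ y = z)
    {α : V → Fin 2} (hb : Bad E α) {δ : V → Fin 2} (hc : Conn E α δ) : δ v ≠ δ s := by
  intro he
  have hd := conn_val hc hb.1
  have hv0 := (hv v).2 rfl
  have hz0 := (hz z).2 rfl
  have hr0 := (hr r).2 rfl
  have hzs : s ≠ z := fun h' => or_irr h.ho s (by have := hz0.1; rwa [← h'] at this)
  have hvz : v ≠ z := fun h' => h.ho _ _ hz0.1 (by have := hv0.1; rwa [h'] at this)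
  have hrz : r ≠ z := fun h' => h.ho _ _ hz0.1 (by have := hr0.1; rwa [h'] at this)
  have hrs : r ≠ s := fun h' => or_irr h.ho s (by have := hr0.1; rwa [h'] at this)
  have hvs : v ≠ s := fun h' => or_irr h.ho s (by have := hv0.1; rwa [h'] at this)
  have v1 : Val E (update δ z (δ s + 1)) := by
    refine nm_val h.ho (s := s) hd (fun y => ?_)
    by_cases hy : y = z
    · right; subst hy; simp [nm, hz0]
    · left; exact update_of_ne hy _ _
  have c1 := upd_conn hb.1 hc v1
  have hrr := B_bad h hs hr hx hb c1
  rw [update_of_ne hrz, update_of_ne hzs] at hrr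
  have v2 : Val E (update (update δ z (δ s + 1)) s (δ s + 1)) := by
    by_contra hn
    obtain ⟨y, h2, _⟩ := cyc_in (upd_cyc v1 hn)
    have e := h2.2
    by_cases hp : InP E s y
    · rw [(hv y).1 hp, update_self, update_of_ne hvs, update_of_ne hvz, he] at e
      exact f2b _ e.symm
    · rw [(hr y).1 ⟨h2.1, hp⟩, update_self, update_of_ne hrs, update_of_ne hrz, hrr.1] at e
      exact f2b _ e.symm
  have h3 := (B_bad h hs hr hx hb (upd_conn hb.1 c1 v2)).1
  rw [update_self, update_of_ne hrs, update_of_ne hrz, hrr.1] at h3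
  exact f2b _ h3.symm

theorem sp_N [Fintype V] {S : Finset V} (h : MinC E S) {s r x v z : V} (hs : s ∈ S)
    (hr : ∀ y, RI E s y ↔ y = r) (hx : ∀ y, RO E s y ↔ y = x)
    (hv : ∀ y, InP E s y ↔ y = v) (hz : ∀ y, OutP E s y ↔ y = z)
    {α : V → Fin 2} (hb : Bad E α) {u₁ u₂ : V} (hne : u₁ ≠ u₂)
    (hu : ∀ y, E y v ↔ y = u₁ ∨ y = u₂) : ∃ t, Nin E α v t := by
  have hv0 := (hv v).2 rfl
  have hr0 := (hr r).2 rfl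
  have hrs : r ≠ s := fun h' => or_irr h.ho s (by have := hr0.1; rwa [h'] at this)
  have hvs : v ≠ s := fun h' => or_irr h.ho s (by have := hv0.1; rwa [h'] at this)
  have fs : Frz E α s := ⟨hb, const_eq hrs.symm (fun δ hd => (B_bad h hs hr hx hb hd).1.symm)⟩
  have fv : Frz E α v := ⟨hb, const_ne hvs (fun δ hd => sp_ne h hs hr hx hv hz hb hd)⟩
  refine mkN fv hv0 hne hu ?_
  intro δ hd
  have hvα := f2a _ _ (sp_ne h hs hr hx hv hz hb .refl)
  have k1 : ∃ u, E u v ∧ δ u = α s + 1 := by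
    obtain ⟨g, y, h1, h2, h3, h4, h5⟩ := frz_in h.ho fs hd
    by_cases hp : InP E s g
    · rw [(hv g).1 hp] at h2
      exact ⟨y, h2, h5⟩
    · exfalso
      rw [(hr g).1 ⟨h1, hp⟩, (B_bad h hs hr hx hb hd).1, fs.2 δ hd] at h4
      exact f2b _ h4.symm
  have k2 : ∃ u, E u v ∧ δ u = α s := by
    obtain ⟨g, y, h1, h2, h3, h4, h5⟩ := frz_in h.ho fv hd
    exact ⟨g, h1, by rw [h4, hvα, f2c]⟩
  obtain ⟨a, a1, a2⟩ := k1
  obtain ⟨b, b1, b2⟩ := k2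
  intro he
  have hall : ∀ y, E y v → δ y = δ u₂ := by
    intro y hy
    rcases (hu y).1 hy with rfl | rfl
    · exact he
    · rfl
  have := hall a a1
  rw [← hall b b1, a2, b2] at this
  exact f2b _ this

section Nfacts
variable [Fintype V] {α : V → Fin 2} {v t : V}

theorem N1 (ho : Oriented E) (hN : Nin E α v t) {δ : V → Fin 2} (hc : Conn E α δ) {w : V}
    (hw : E v w) : δ w = α v + 1 := by
  obtain ⟨hf, ⟨w', hw'⟩, _⟩ := hN
  obtain ⟨g, y, h1, h2, h3, h4, h5⟩ := frz_out ho hf hc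
  rw [hw'.2 w hw, ← hw'.2 g h1, h4]

theorem N_edge (hN : Nin E α v t) : E t v := by
  obtain ⟨hf, _, u, hu, _⟩ := hN
  exact (hu t).2 (Or.inr rfl)

theorem N_col (hN : Nin E α v t) : α v = α t + 1 := by
  obtain ⟨hf, _, u, hu, _, _, _, h⟩ := hN
  exact f2a _ _ h.symm

theorem N_frz (hN : Nin E α v t) : Frz E α t := hN.2.2.choose_spec.2.2.1

theorem N_RO (hN : Nin E α v t) : RO E t v := by
  refine ⟨N_edge hN, ?_⟩
  obtain ⟨hf, _, u, hu, _, _, h1, h2⟩ := hN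
  intro h
  have := h.2 u ((hu u).2 (Or.inl rfl))
  rw [this] at h1
  exact h2 h1

theorem Na (ho : Oriented E) (hN : Nin E α v t) {δ : V → Fin 2} (hc : Conn E α δ) :
    ∃ e, RI E t e ∧ δ e = α t := by
  have hcol := N_col hN
  have hft := N_frz hN
  obtain ⟨hf, _, u, hu, hfu, _, hu1, _⟩ := hN
  have hc' := conn_trans hc (nm_conn (s := t) ho (conn_val hc hf.1.1))
  obtain ⟨g, y, h1, h2, h3, h4, h5⟩ := frz_in ho hf hc'
  rw [hcol, f2c] at h4 h5
  rcases (hu g).1 h1 with hg | hg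
  · exfalso
    rw [hg, hfu.2 _ hc', hu1, hcol] at h4
    exact f2b _ h4
  · subst hg
    have hyp : ¬ (InP E g y ∨ OutP E g y) := by
      intro hp
      have := nm_nm ho g δ y hp
      rw [h5, nm_s ho, hft.2 δ hc] at this
      exact this rfl
    refine ⟨y, ⟨h2, fun hp => hyp (Or.inl hp)⟩, ?_⟩
    rw [← h5, nm_off ho _ hyp]

theorem Nb (ho : Oriented E) (hN : Nin E α v t) {δ : V → Fin 2} (hc : Conn E α δ) :
    ∃ g y, E t g ∧ E g y ∧ δ g = α t + 1 ∧ δ y = α t + 1 ∧ ¬ Nin E α g t := by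
  have hft := N_frz hN
  obtain ⟨g, y, h1, h2, h3, h4, h5⟩ := frz_out ho hft hc
  refine ⟨g, y, h1, h2, h4, h5, ?_⟩
  intro hg
  have := N1 ho hg hc h2
  rw [h5, N_col hg] at this
  exact f2b _ this.symm

theorem Nc (ho : Oriented E) (hft : Frz E α t) : ¬ Flippable E t α := by
  rintro ⟨c, h1, h2⟩
  have c1 := nm_conn (s := t) ho hft.1.1
  have hfl : Flippable E t (nm E t α) := by
    refine ⟨c, fun x hx => ?_, fun x hx => ?_⟩
    · rw [nm_off ho _ (fun h => RO_off ho hx (Or.inr h)), h1 x hx]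
    · rw [nm_off ho _ (fun h => RI_off ho hx (Or.inr h)), h2 x hx]
  have c2 := flip ho (conn_val c1 hft.1.1) (nm_nm ho t α) hfl
  have := hft.2 _ (conn_trans c1 c2)
  rw [fl_on _ (Or.inl rfl), nm_s ho] at this
  exact f2b _ this

end Nfacts


section count
variable [Fintype V]

noncomputable def cd (P : V → Prop) : ℕ := (Finset.univ.filter P).card

theorem cd_le {P Q : V → Prop} (h : ∀ x, P x → Q x) : cd P ≤ cd Q :=
  Finset.card_le_card (fun x hx => by simpa using h x (by simpa using hx))

theorem cd_congr {P Q : V → Prop} (h : ∀ x, P x ↔ Q x) : cd P = cd Q :=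
  le_antisymm (cd_le fun x => (h x).1) (cd_le fun x => (h x).2)

theorem cd_lt {P Q : V → Prop} (h : ∀ x, P x → Q x) {x : V} (hx : Q x) (hx' : ¬ P x) :
    cd P + 1 ≤ cd Q := by
  refine Finset.card_lt_card (Finset.ssubset_iff_of_subset ?_ |>.2 ⟨x, ?_, ?_⟩)
  · exact fun x hx => by simpa using h x (by simpa using hx)
  · simpa using hx
  · simpa using hx'

theorem cd_lt2 {P Q : V → Prop} (h : ∀ x, P x → Q x) {x y : V} (hx : Q x) (hx' : ¬ P x)
    (hy : Q y) (hy' : ¬ P y) (hxy : x ≠ y) : cd P + 2 ≤ cd Q := by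
  have h1 : cd P + 1 ≤ cd (fun z => P z ∨ z = x) :=
    cd_lt (fun z hz => Or.inl hz) (x := x) (Or.inr rfl) hx'
  have h2 : cd (fun z => P z ∨ z = x) + 1 ≤ cd Q :=
    cd_lt (x := y) (by rintro z (hz | rfl); exacts [h z hz, hx]) hy
      (by rintro (h | h); exacts [hy' h, hxy h.symm])
  omega

theorem cd_false {P : V → Prop} (h : ∀ x, ¬ P x) : cd P = 0 := by
  simp [cd, h]

theorem cd_pos {P : V → Prop} {x : V} (h : P x) : 1 ≤ cd P := by
  have := cd_lt (P := fun _ => False) (Q := P) (fun _ h => h.elim) h id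
  omega

theorem cd_zero {P : V → Prop} (h : cd P = 0) (x : V) : ¬ P x := by
  intro hx; have := cd_pos hx; omega

theorem cd_two {P : V → Prop} {x y : V} (hx : P x) (hy : P y) (hxy : x ≠ y) : 2 ≤ cd P := by
  have := cd_lt2 (P := fun _ => False) (Q := P) (fun _ h => h.elim) hx id hy id hxy
  omega

theorem cd_add {P Q R : V → Prop} (h : ∀ x, R x ↔ P x ∨ Q x) (h' : ∀ x, P x → ¬ Q x) :
    cd R = cd P + cd Q := by
  unfold cd
  rw [← Finset.card_union_of_disjoint]
  · congr 1; ext x; simp [h]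
  · rw [Finset.disjoint_left]; intro x hx hx'
    exact h' x (by simpa using hx) (by simpa using hx')

theorem cd_or {P Q R : V → Prop} (h : ∀ x, R x → P x ∨ Q x) : cd R ≤ cd P + cd Q := by
  unfold cd
  refine le_trans (Finset.card_le_card ?_) (Finset.card_union_le _ _)
  intro x hx; simpa using h x (by simpa using hx)

theorem cd_eq_one {P : V → Prop} (h : cd P = 1) : ∃ x, ∀ y, P y ↔ y = x := by
  obtain ⟨x, hx⟩ := Finset.card_eq_one.1 h
  refine ⟨x, fun y => ?_⟩
  have : y ∈ Finset.univ.filter P ↔ y ∈ ({x} : Finset V) := by rw [hx]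
  simpa using this

theorem cd_eq_two {P : V → Prop} (h : cd P = 2) : ∃ x y, x ≠ y ∧ ∀ z, P z ↔ z = x ∨ z = y := by
  obtain ⟨x, y, hne, hx⟩ := Finset.card_eq_two.1 h
  refine ⟨x, y, hne, fun z => ?_⟩
  have : z ∈ Finset.univ.filter P ↔ z ∈ ({x, y} : Finset V) := by rw [hx]
  simpa using this

noncomputable def dg (E : V → V → Prop) (v : V) : ℕ := cd (E v) + cd (fE E v)
def NN (E : V → V → Prop) (α : V → Fin 2) (v : V) : Prop :=
  (∃ t, Nin E α v t) ∨ (∃ t, Nin (fE E) α v t)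
def PS (E : V → V → Prop) (α : V → Fin 2) (s v : V) : Prop :=
  dg E v = 3 ∧ ¬ NN E α v ∧ (InP E s v ∨ OutP E s v)

theorem dO_eq (s : V) : cd (E s) = cd (RO E s) + cd (OutP E s) :=
  cd_add (fun x => by unfold RO; have : OutP E s x → E s x := fun h => h.1
                      tauto) (fun x h => h.2)
theorem dI_eq (s : V) : cd (fE E s) = cd (RI E s) + cd (InP E s) := dO_eq (E := fE E) s

theorem inP_card {s p : V} (h : InP E s p) : cd (E p) = 1 := by
  have : cd (E p) = ({s} : Finset V).card := by
    unfold cd; congr 1; ext x; simp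
    exact ⟨fun hx => h.2 x hx, fun hx => hx ▸ h.1⟩
  simpa using this

theorem inP_two {s p : V} (h : InP E s p) (h3 : dg E p = 3) :
    ∃ x y, x ≠ y ∧ ∀ z, E z p ↔ z = x ∨ z = y := by
  have := inP_card h
  exact cd_eq_two (P := fE E p) (by unfold dg at h3; omega)

theorem dg_fE (v : V) : dg (fE E) v = dg E v := by
  unfold dg; rw [add_comm]; rfl

theorem NN_fE {α : V → Fin 2} (v : V) : NN (fE E) α v ↔ NN E α v := or_comm
theorem PS_fE {α : V → Fin 2} (s v : V) : PS (fE E) α s v ↔ PS E α s v := by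
  unfold PS; rw [dg_fE, NN_fE]; exact and_congr Iff.rfl (and_congr Iff.rfl or_comm)

theorem PS_le {α : V → Fin 2} (s : V) : cd (PS E α s) ≤ cd (InP E s) + cd (OutP E s) :=
  cd_or fun _ h => h.2.2

theorem KS_main (ho : Oriented E) {α : V → Fin 2} {s v₀ : V} (hN : Nin E α v₀ s) :
    cd (fun v => Nin E α v s) + cd (fun v => Nin (fE E) α v s) + cd (PS E α s) + 7 ≤ 2 * dg E s := by
  have ho' : Oriented (fE E) := fun u v h1 h2 => ho _ _ h1 h2
  have hft := N_frz hN
  have hP := PS_le (E := E) (α := α) s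
  have hO := dO_eq (E := E) s
  have hI := dI_eq (E := E) s
  have hd : dg E s = cd (E s) + cd (fE E s) := rfl
  have hK : ∀ x, Nin E α x s → RO E s x := fun x h => N_RO h
  have hL : ∀ x, Nin (fE E) α x s → RI E s x := fun x h => N_RO (E := fE E) h
  have hKc : ∀ x, Nin E α x s → α x = α s + 1 := fun x h => N_col h
  have hLc : ∀ x, Nin (fE E) α x s → α x = α s + 1 := fun x h => N_col h
  obtain ⟨e, he, hec⟩ := Na ho hN .refl
  have heL : ¬ Nin (fE E) α e s := fun h => f2b _ ((hLc e h).symm.trans hec)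
  obtain ⟨g, y, hg1, hg2, hg3, hg4, hg5⟩ := Nb ho hN .refl
  obtain ⟨c, -, hc1, -, -, hc2, -⟩ := frz_in ho hft .refl
  have hk1 : 1 ≤ cd (fun v => Nin E α v s) := cd_pos (x := v₀) hN
  have hOk : cd (fun v => Nin E α v s) + 1 ≤ cd (E s) := cd_lt (fun x h => (hK x h).1) hg1 hg5
  have hec' : e ≠ c := by
    rintro rfl; exact f2b _ (hc2.symm.trans hec)
  have hI2 : 2 ≤ cd (fE E s) := cd_two (P := fE E s) he.1 hc1 hec'
  have hRI : cd (fun v => Nin (fE E) α v s) + 1 ≤ cd (RI E s) := cd_lt hL he heL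
  have hRO : cd (fun v => Nin E α v s) ≤ cd (RO E s) := cd_le hK
  by_cases hl : ∃ z, Nin (fE E) α z s
  · obtain ⟨z, hz⟩ := hl
    obtain ⟨e', he', hec2⟩ := Na (E := fE E) ho' hz .refl
    have he'K : ¬ Nin E α e' s := fun h => f2b _ ((hKc e' h).symm.trans hec2)
    have h1 : cd (fun v => Nin E α v s) + 1 ≤ cd (RO E s) := cd_lt hK he' he'K
    have h2 : cd (fun v => Nin E α v s) + 2 ≤ cd (E s) :=
      cd_lt2 (fun x h => (hK x h).1) he'.1 he'K hg1 hg5 (by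
        rintro rfl; exact f2b _ (hg3.symm.trans hec2))
    omega
  · push Not at hl
    have hl0 := cd_false hl
    have hR : cd (fun v => Nin E α v s) + 2 ≤ cd (RO E s) + cd (RI E s) := by
      by_contra hcon
      apply Nc ho hft
      refine ⟨α s, fun x hx => ?_, fun x hx => ?_⟩
      · by_contra hne
        have := cd_lt hK hx (fun h => hne (hKc x h))
        omega
      · by_contra hne
        have := cd_two hx he (by rintro rfl; exact hne hec)
        omega
    by_cases h5 : 5 ≤ dg E s
    · omega
    · have hkk : cd (fun v => Nin E α v s) = 1 := by omega
      have hO2 : cd (E s) = 2 := by omega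
      -- unique non-N out-neighbour
      have huniq : ∀ g', E s g' → ¬ Nin E α g' s → g' = g := by
        intro g' h1 h2
        by_contra hne
        have := cd_lt2 (fun x h => (hK x h).1) h1 h2 hg1 hg5 hne
        omega
      have houtb : ∀ δ, Conn E α δ → ∀ x, E s x → δ x = α s + 1 := by
        intro δ hδ x hx
        by_cases hx' : Nin E α x s
        · rw [hx'.1.2 δ hδ, hKc x hx']
        · obtain ⟨g', y', a1, a2, a3, a4, a5⟩ := Nb ho hN hδ
          rw [huniq x hx hx', ← huniq g' a1 a5, a3]
      -- all in-neighbours are in RI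
      have hRI2 : 2 ≤ cd (RI E s) := by
        have c1 := nm_conn (s := s) ho hft.1.1
        have hc2 : Conn E (nm E s α) (fun x => if InP E s x then α s else nm E s α x) := by
          refine conn_of_interval fun μ hμ => valV (s := s) (val_congr (δ := nm E s α) (fun x hx => ?_)
            (val_rs (conn_val c1 hft.1.1))) (Or.inl ?_)
          · have hx' : ¬ InP E s x := fun h => hx (Or.inr (Or.inl h))
            simpa [hx'] using hμ x
          · intro x hx
            have e1 : μ s = α s := by
              have hx' : ¬ InP E s s := fun h => or_irr ho s h.1
              have := hμ s
              simpa [hx', nm_s ho] using this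
            have e2 : μ x = α s + 1 := by
              have hx' : ¬ InP E s x := fun h => ho _ _ hx h.1
              have := hμ x
              simp only [hx', if_false, or_self] at this
              rw [this]; exact houtb _ c1 x hx
            rw [e1, e2]; exact f2b _
        have c3 := conn_trans c1 hc2
        obtain ⟨q, -, q1, -, -, q2, -⟩ := frz_in ho hft c3
        have hq : ¬ InP E s q := by
          intro h
          simp only [h, if_true] at q2
          exact f2b _ q2.symm
        obtain ⟨e', e1, e2⟩ := Na ho hN c3
        exact cd_two e1 ⟨q1, hq⟩ (by rintro rfl; exact f2b _ (q2.symm.trans e2))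
      have hIn0 : cd (InP E s) = 0 := by omega
      have hPS : cd (PS E α s) = 0 := by
        apply cd_false
        rintro x ⟨h3, hnn, hp⟩
        have hp : OutP E s x := hp.resolve_left (cd_zero hIn0 x)
        have hxN : ¬ Nin E α x s := fun h => (hK x h).2 hp
        have hxg := huniq x hp.1 hxN
        apply hnn
        right
        obtain ⟨y₁, y₂, hne, hy⟩ := inP_two (E := fE E) (s := s) (p := x) hp (by rwa [dg_fE])
        have hfx : Frz E α x := ⟨hft.1, fun δ hδ => by
          rw [houtb δ hδ x hp.1, houtb α .refl x hp.1]⟩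
        refine mkN (E := fE E) ((frz_fE _ _).2 hfx) (w := s) hp hne hy ?_
        intro δ hδ
        rw [conn_fE] at hδ
        obtain ⟨g', y', a1, a2, a3, a4, a5⟩ := Nb ho hN hδ
        rw [huniq g' a1 a5, ← hxg] at a2
        obtain ⟨b, -, b1, -, -, b2, -⟩ := frz_out ho hfx hδ
        rw [houtb α .refl x hp.1, f2c] at b2
        intro heq
        have hall : ∀ z, E x z → δ z = δ y₂ := by
          intro z hz
          rcases (hy z).1 hz with rfl | rfl
          · exact heq
          · rfl
        have := hall y' a2
        rw [← hall b b1, a4, b2] at this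
        exact f2b _ this
      omega

theorem vertex_ineq {S : Finset V} (h : MinC E S) {α : V → Fin 2}
    (hα : (∃ β, Bad E β) → Bad E α) {s : V} (hs : s ∈ S) :
    cd (fun v => Nin E α v s) + cd (fun v => Nin (fE E) α v s) + cd (PS E α s) + 7
      ≤ 2 * dg E s + (if dg E s = 3 then 1 else 0) := by
  by_cases hk : ∃ v, Nin E α v s
  · obtain ⟨v, hv⟩ := hk
    have := KS_main h.ho hv
    omega
  by_cases hl : ∃ v, Nin (fE E) α v s
  · obtain ⟨v, hv⟩ := hl
    have := KS_main h.fE.ho hv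
    rw [dg_fE, cd_congr (PS_fE (E := E) (α := α) s)] at this
    change cd (fun v => Nin (fE E) α v s) + cd (fun v => Nin E α v s) + _ + 7 ≤ _ at this
    omega
  push Not at hk hl
  rw [cd_false hk, cd_false hl]
  have hP := PS_le (E := E) (α := α) s
  have hO := dO_eq (E := E) s
  have hI := dI_eq (E := E) s
  have hd : dg E s = cd (E s) + cd (fE E s) := rfl
  have c2 : cd (RI E s) = 0 → 3 ≤ cd (RO E s) := fun h0 => C2 h hs (cd_zero h0)
  have c2' : cd (RO E s) = 0 → 3 ≤ cd (RI E s) := fun h0 => C2 (E := fE E) h.fE hs (cd_zero h0)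
  by_cases h3 : 3 ≤ cd (RI E s) + cd (RO E s)
  · split_ifs <;> omega
  have hRI : cd (RI E s) = 1 := by omega
  have hRO : cd (RO E s) = 1 := by omega
  obtain ⟨r, hr⟩ := cd_eq_one hRI
  obtain ⟨x, hx⟩ := cd_eq_one hRO
  obtain ⟨v, hv⟩ := C3 h hs hr hx
  obtain ⟨z, hz⟩ := C3 (E := fE E) h.fE hs hx hr
  have hv1 := cd_pos hv
  have hz1 : 1 ≤ cd (OutP E s) := cd_pos (P := OutP E s) hz
  by_cases h5 : 5 ≤ dg E s
  · omega
  have hPS : cd (PS E α s) = 0 := by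
    obtain ⟨v', hv'⟩ := cd_eq_one (P := InP E s) (by omega)
    obtain ⟨z', hz'⟩ := cd_eq_one (P := OutP E s) (by omega)
    have hb := hα (B_exbad h hs hr hx)
    apply cd_false
    rintro p ⟨h3, hnn, hp⟩
    apply hnn
    rcases hp with hp | hp
    · left
      obtain ⟨u₁, u₂, hne, hu⟩ := inP_two hp h3
      rw [(hv' p).1 hp] at hu ⊢
      exact sp_N h hs hr hx hv' hz' hb hne hu
    · right
      obtain ⟨u₁, u₂, hne, hu⟩ := inP_two (E := fE E) (s := s) (p := p) hp (by rwa [dg_fE])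
      rw [(hz' p).1 hp] at hu ⊢
      exact sp_N (E := fE E) h.fE hs hx hr hz' hv' ((bad_fE _).2 hb) hne hu
  omega

def Don (E : V → V → Prop) (α : V → Fin 2) (s v : V) : Prop :=
  Nin E α v s ∨ Nin (fE E) α v s ∨ PS E α s v

theorem don_le (α : V → Fin 2) (s : V) : cd (Don E α s) ≤
    cd (fun v => Nin E α v s) + cd (fun v => Nin (fE E) α v s) + cd (PS E α s) := by
  have h1 : cd (Don E α s) ≤ cd (fun v => Nin E α v s) +
    cd (fun v => Nin (fE E) α v s ∨ PS E α s v) := cd_or fun x h => h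
  have h2 : cd (fun v => Nin (fE E) α v s ∨ PS E α s v) ≤
    cd (fun v => Nin (fE E) α v s) + cd (PS E α s) := cd_or fun x h => h
  omega

theorem don_ex {S : Finset V} (h : MinC E S) (α : V → Fin 2) {v : V} (hv : v ∈ S)
    (h3 : dg E v = 3) : ∃ s ∈ S, Don E α s v := by
  by_cases hn : NN E α v
  · rcases hn with ⟨t, ht⟩ | ⟨t, ht⟩
    · exact ⟨t, (h.supp _ _ (N_edge ht)).1, Or.inl ht⟩
    · exact ⟨t, (h.fE.supp _ _ (N_edge ht)).1, Or.inr (Or.inl ht)⟩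
  · obtain ⟨y, hy⟩ := C1 h hv
    obtain ⟨y', hy'⟩ := C1 h.fE hv
    have h1 := cd_pos hy
    have h2 := cd_pos hy'
    have hd : dg E v = cd (E v) + cd (fE E v) := rfl
    by_cases h4 : cd (E v) = 1
    · obtain ⟨w, hw⟩ := cd_eq_one h4
      have hw0 := (hw w).2 rfl
      exact ⟨w, (h.supp _ _ hw0).2, Or.inr (Or.inr ⟨h3, hn, Or.inl ⟨hw0, fun y hy => (hw y).1 hy⟩⟩)⟩
    · obtain ⟨w, hw⟩ := cd_eq_one (P := fE E v) (by omega)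
      have hw0 := (hw w).2 rfl
      exact ⟨w, (h.supp _ _ hw0).1, Or.inr (Or.inr ⟨h3, hn, Or.inr ⟨hw0, fun y hy => (hw y).1 hy⟩⟩)⟩

theorem sum_out {S : Finset V} (h : MinC E S) :
    ∑ s ∈ S, cd (E s) = (Finset.univ.filter (fun p : V × V => E p.1 p.2)).card := by
  rw [Finset.card_eq_sum_card_fiberwise (f := Prod.fst) (t := S)]
  · refine Finset.sum_congr rfl fun s _ => ?_
    unfold cd
    refine Finset.card_bij (fun y _ => (s, y)) ?_ ?_ ?_
    · intro a ha; simpa using ha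
    · intro a _ b _ hab; simpa using hab
    · rintro ⟨a, b⟩ hb
      simp only [Finset.mem_filter, Finset.mem_univ, true_and] at hb
      obtain ⟨h1, rfl⟩ := hb
      exact ⟨b, by simpa using h1, rfl⟩
  · intro p hp
    have : E p.1 p.2 := by simpa using hp
    exact (h.supp _ _ this).1

theorem sum_in {S : Finset V} (h : MinC E S) :
    ∑ s ∈ S, cd (fE E s) = (Finset.univ.filter (fun p : V × V => E p.1 p.2)).card := by
  rw [sum_out h.fE]
  refine Finset.card_bij (fun p _ => (p.2, p.1)) ?_ ?_ ?_
  · intro a ha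
    exact Finset.mem_filter.2 ⟨Finset.mem_univ _, (Finset.mem_filter.1 ha).2⟩
  · rintro ⟨a, b⟩ _ ⟨c, d⟩ _ hab
    simp only [Prod.mk.injEq] at hab ⊢; exact hab.symm
  · rintro ⟨a, b⟩ hb
    exact ⟨(b, a), Finset.mem_filter.2 ⟨Finset.mem_univ _, (Finset.mem_filter.1 hb).2⟩, rfl⟩

theorem final {S : Finset V} (h : MinC E S) :
    7 * S.card ≤ 4 * (Finset.univ.filter (fun p : V × V => E p.1 p.2)).card := by
  obtain ⟨α, hα⟩ : ∃ α, (∃ β, Bad E β) → Bad E α := by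
    by_cases hb : ∃ β, Bad E β
    · obtain ⟨β, hb⟩ := hb
      exact ⟨β, fun _ => hb⟩
    · exact ⟨fun _ => 0, fun h => absurd h hb⟩
  have h1 : ∀ s ∈ S, cd (Don E α s) + 7 ≤ 2 * dg E s + (if dg E s = 3 then 1 else 0) := by
    intro s hs
    have := vertex_ineq h hα hs
    have := don_le (E := E) α s
    omega
  have h2 := Finset.sum_le_sum h1
  rw [Finset.sum_add_distrib, Finset.sum_add_distrib, ← Finset.mul_sum] at h2
  have h3 : ∑ s ∈ S, dg E s = 2 * (Finset.univ.filter (fun p : V × V => E p.1 p.2)).card := by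
    unfold dg
    rw [Finset.sum_add_distrib, sum_out h, sum_in h]; ring
  have h4 : ∑ s ∈ S, (if dg E s = 3 then 1 else 0) ≤ ∑ s ∈ S, cd (Don E α s) := by
    have e1 : ∑ s ∈ S, (if dg E s = 3 then 1 else 0) = (S.filter (fun v => dg E v = 3)).card := by
      rw [Finset.card_filter]
    rw [e1]
    have : S.filter (fun v => dg E v = 3) ⊆ S.biUnion (fun s => Finset.univ.filter (Don E α s)) := by
      intro v hv
      rw [Finset.mem_filter] at hv
      obtain ⟨s, hs, hd⟩ := don_ex h α hv.1 hv.2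
      rw [Finset.mem_biUnion]
      exact ⟨s, hs, by simpa using hd⟩
    exact (Finset.card_le_card this).trans Finset.card_biUnion_le
  rw [h3] at h2
  simp only [Finset.sum_const, smul_eq_mul] at h2
  omega

end count

theorem exists_min [Fintype V] {D : V → V → Prop} (ho : Oriented D) (hn : ¬ Mixing D 2) :
    ∃ S : Finset V, MinC (rs D (↑S)ᶜ) S := by
  have hex : ∃ S : Finset V, ¬ Mixing (rs D (↑S)ᶜ) 2 := by
    refine ⟨Finset.univ, ?_⟩
    have : rs D (↑(Finset.univ : Finset V))ᶜ = D := by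
      funext a b; simp [rs]
    rwa [this]
  obtain ⟨S, hS, hmin⟩ := WellFounded.has_min (wellFounded_lt (α := Finset V))
    {S : Finset V | ¬ Mixing (rs D (↑S)ᶜ) 2} hex
  refine ⟨S, fun u v h1 h2 => ho _ _ h1.1 h2.1, ?_, ?_, hS⟩
  · rintro u v ⟨_, h2, h3⟩
    simpa using And.intro h2 h3
  · intro X s hs hX
    by_contra hcon
    refine hmin (S.filter (fun x => x ∉ X)) ?_ ?_
    · have : rs D (↑(S.filter (fun x => x ∉ X)))ᶜ = rs (rs D (↑S)ᶜ) X := by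
        funext a b
        simp only [rs, Set.mem_compl_iff, not_not, Finset.coe_filter, Finset.mem_coe]
        apply propext
        constructor
        · rintro ⟨h1, h2, h3⟩; exact ⟨⟨h1, h2.1, h3.1⟩, h2.2, h3.2⟩
        · rintro ⟨⟨h1, h2, h3⟩, h4, h5⟩; exact ⟨h1, ⟨h2, h4⟩, ⟨h3, h5⟩⟩
      change ¬ Mixing _ 2
      rw [this]; exact hcon
    · refine Finset.ssubset_iff_of_subset (Finset.filter_subset _ _) |>.2 ⟨s, hs, ?_⟩
      simp [hX]

theorem S_ne [Fintype V] {S : Finset V} (h : MinC E S) : S.Nonempty := by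
  rw [Finset.nonempty_iff_ne_empty]
  rintro rfl
  apply h.hnot
  rw [mixing_iff]
  intro α β _ _
  refine conn_of_interval fun δ _ v hv => ?_
  obtain ⟨y, h1, _⟩ := cyc_out hv
  have := (h.supp _ _ h1.1).1
  simp at this

end RD


/-- If an oriented graph is not `2`-mixing, then its maximum average degree is
at least `7/2`: some nonempty set `S` of vertices satisfies
`2 |A(S)| / |S| ≥ 7/2`, i.e. `4 |A(S)| ≥ 7 |S|`. -/
theorem not_two_mixing_mad {V : Type} [Fintype V] (D : V → V → Prop)
    (horiented : Oriented D) (hnotmixing : ¬ Mixing D 2) :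
    ∃ S : Set V, S.Nonempty ∧ 7 * S.ncard ≤ 4 * (arcSetOn D S).ncard := by
  obtain ⟨S, hS⟩ := RD.exists_min horiented hnotmixing
  refine ⟨↑S, by simpa using RD.S_ne hS, ?_⟩
  have := RD.final hS
  rw [Set.ncard_coe_finset]
  have e : arcSetOn D (↑S) = ↑(Finset.univ.filter (fun p : V × V => RD.rs D (↑S)ᶜ p.1 p.2)) := by
    ext p
    simp only [arcSetOn, RD.rs, Set.mem_setOf_eq, Set.mem_compl_iff, not_not, Finset.coe_filter,
      Finset.mem_univ, true_and, Finset.mem_coe]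
    tauto
  rw [e, Set.ncard_coe_finset]
  exact this
end

section
/- Let G be an undirected graph on n vertices, let k be the total number of colours, let L be a ⌈k/3⌉-feasible list assignment with lists contained in {1,…,k}, and let α be an L-colouring of G that avoids a set S of ⌈k/3⌉ colours. Then for any set S′ of ⌈k/3⌉ colours there is an L-colouring β of G that avoids S′ and a recolouring sequence from α to β in C(G, L) of length at most ((4k + 12)/3)·n. -/
/-- `α` is a proper colouring of `G` with `α v ∈ L v` for every vertex. -/
def IsListColoring {V : Type} {k : ℕ} (G : SimpleGraph V) (L : V → Finset (Fin k))
    (α : V → Fin k) : Prop :=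
  (∀ u v, G.Adj u v → α u ≠ α v) ∧ ∀ v, α v ∈ L v

namespace AvoidCol
open Finset
open scoped Classical

section
variable {n k : ℕ}

/-- proper list colouring restricted to `P` -/
def Val (G : SimpleGraph (Fin n)) (P : Finset (Fin n)) (L : Fin n → Finset (Fin k))
    (α : Fin n → Fin k) : Prop :=
  (∀ u ∈ P, ∀ v ∈ P, G.Adj u v → α u ≠ α v) ∧ ∀ v ∈ P, α v ∈ L v

def run (Q : (Fin n → Fin k) → Prop) : (Fin n → Fin k) → List (Fin n × Fin k) → Prop
  | α, [] => Q α
  | α, m :: ms => Q α ∧ run Q (Function.update α m.1 m.2) ms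

def fin : (Fin n → Fin k) → List (Fin n × Fin k) → (Fin n → Fin k)
  | α, [] => α
  | α, m :: ms => fin (Function.update α m.1 m.2) ms

noncomputable def nb (G : SimpleGraph (Fin n)) (P : Finset (Fin n)) (v : Fin n) :
    Finset (Fin n) := P.filter fun w => v < w ∧ G.Adj v w

lemma fin_append (α : Fin n → Fin k) (l₁ l₂) : fin α (l₁ ++ l₂) = fin (fin α l₁) l₂ := by
  induction l₁ generalizing α with
  | nil => rfl
  | cons m ms ih => simp [fin, ih]

lemma run_append {Q : (Fin n → Fin k) → Prop} {α : Fin n → Fin k} {l₁ l₂}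
    (h₁ : run Q α l₁) (h₂ : run Q (fin α l₁) l₂) : run Q α (l₁ ++ l₂) := by
  induction l₁ generalizing α with
  | nil => exact h₂
  | cons m ms ih => exact ⟨h₁.1, ih h₁.2 h₂⟩

lemma run_head {Q : (Fin n → Fin k) → Prop} {α : Fin n → Fin k} {l}
    (h : run Q α l) : Q α := by
  cases l with
  | nil => exact h
  | cons m ms => exact h.1

lemma run_last {Q : (Fin n → Fin k) → Prop} {α : Fin n → Fin k} {l}
    (h : run Q α l) : Q (fin α l) := by
  induction l generalizing α with
  | nil => exact h
  | cons m ms ih => exact ih h.2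

lemma run_mono {Q Q' I : (Fin n → Fin k) → Prop} {α : Fin n → Fin k} {l}
    (h : run Q α l) (hI : I α)
    (hstep : ∀ α, ∀ m ∈ l, I α → I (Function.update α m.1 m.2))
    (hQ : ∀ α, Q α → I α → Q' α) : run Q' α l := by
  induction l generalizing α with
  | nil => exact hQ _ h hI
  | cons m ms ih =>
    exact ⟨hQ _ h.1 hI, ih h.2 (hstep _ m (by simp) hI)
      (fun α m' hm' => hstep α m' (by simp [hm']))⟩

lemma run_seq {Q : (Fin n → Fin k) → Prop} {α : Fin n → Fin k} {l} (h : run Q α l) :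
    ∃ (m : ℕ) (γ : ℕ → Fin n → Fin k), m ≤ l.length ∧ γ 0 = α ∧ γ m = fin α l ∧
      (∀ i ≤ m, Q (γ i)) ∧
      (∀ i < m, ∃ v, γ i v ≠ γ (i + 1) v ∧ ∀ w, w ≠ v → γ i w = γ (i + 1) w) := by
  induction l generalizing α with
  | nil =>
    refine ⟨0, fun _ => α, by simp, rfl, rfl, fun _ _ => h, by simp⟩
  | cons m ms ih =>
    obtain ⟨M, γ, h1, h2, h3, h4, h5⟩ := ih h.2
    by_cases hm : α m.1 = m.2
    · have : Function.update α m.1 m.2 = α := by rw [← hm]; simp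
      rw [this] at h2 h3
      exact ⟨M, γ, by simp; omega, h2, by rw [h3]; simp [fin, this], h4, h5⟩
    · refine ⟨M + 1, fun i => Nat.casesOn i α γ, by simpa using h1, rfl, h3, ?_, ?_⟩
      · intro i hi
        cases i with
        | zero => exact h.1
        | succ i => exact h4 i (by omega)
      · intro i hi
        cases i with
        | zero =>
          refine ⟨m.1, ?_, ?_⟩
          · simpa [h2] using hm
          · intro w hw
            simp [h2, hw]
        | succ i => exact h5 i (by omega)

lemma run_congr {G : SimpleGraph (Fin n)} {P : Finset (Fin n)} {L : Fin n → Finset (Fin k)}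
    {α α' : Fin n → Fin k} {l} (hα : ∀ u ∈ P, α u = α' u) (h : run (Val G P L) α l) :
    run (Val G P L) α' l := by
  have hv : ∀ {α α' : Fin n → Fin k}, (∀ u ∈ P, α u = α' u) → Val G P L α → Val G P L α' := by
    intro α α' he h
    refine ⟨fun u hu v hv ha => ?_, fun v hv => ?_⟩
    · rw [← he u hu, ← he v hv]; exact h.1 u hu v hv ha
    · rw [← he v hv]; exact h.2 v hv
  induction l generalizing α α' with
  | nil => exact hv hα h
  | cons m ms ih =>
    refine ⟨hv hα h.1, ih ?_ h.2⟩
    intro u hu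
    by_cases hum : u = m.1
    · subst hum; simp
    · simp [hum, hα u hu]

/-- colours targeted by moves at neighbours of `v` -/
noncomputable def tg (G : SimpleGraph (Fin n)) (v : Fin n) (l : List (Fin n × Fin k)) :
    List (Fin k) := (l.filter fun m => G.Adj v m.1).map Prod.snd

lemma val_insert {G : SimpleGraph (Fin n)} {s : Finset (Fin n)} {L : Fin n → Finset (Fin k)}
    {v : Fin n} {α : Fin n → Fin k} (h : Val G s L α) (hL : α v ∈ L v)
    (hn : ∀ w ∈ s, G.Adj v w → α w ≠ α v) : Val G (insert v s) L α := by
  refine ⟨?_, ?_⟩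
  · intro u hu w hw ha
    rw [mem_insert] at hu hw
    rcases hu with rfl | hu <;> rcases hw with rfl | hw
    · exact absurd ha (G.loopless.irrefl _)
    · exact (hn w hw ha).symm
    · exact hn u hu ha.symm
    · exact h.1 u hu w hw ha
  · intro u hu
    rw [mem_insert] at hu
    rcases hu with rfl | hu
    · exact hL
    · exact h.2 u hu

lemma insert_path (G : SimpleGraph (Fin n)) (L : Fin n → Finset (Fin k)) (s : Finset (Fin n))
    (v : Fin n) (hvs : ∀ w ∈ s, v < w) (a : ℕ) (ha : 0 < a)
    (hL : (nb G s v).card + 1 + a ≤ (L v).card) (l : List (Fin n × Fin k)) :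
    ∀ (j : ℕ) (α : Fin n → Fin k), Val G (insert v s) L α → run (Val G s L) α l →
      (∀ m ∈ l, m.1 ∈ s) → α v ∉ (tg G v l).take j →
      ∃ l' : List (Fin n × Fin k), run (Val G (insert v s) L) α l' ∧
        (∀ m ∈ l', m.1 ∈ insert v s) ∧
        (∀ u, u ≠ v → fin α l' u = fin α l u) ∧
        (∀ u, u ≠ v → (l'.map Prod.fst).count u = (l.map Prod.fst).count u) ∧
        a * (l'.map Prod.fst).count v ≤ ((tg G v l).length - j) + (a - 1) := by
  have hvs' : v ∉ s := fun h => lt_irrefl _ (hvs v h)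
  induction l with
  | nil =>
    intro j α hα _ _ _
    exact ⟨[], hα, by simp, by simp, by simp, by simp⟩
  | cons m l ih =>
    obtain ⟨u, c⟩ := m
    intro j α hα hrun hs hj
    have hus : u ∈ s := hs (u, c) (by simp)
    have hs' : ∀ m ∈ l, m.1 ∈ s := fun m hm => hs m (by simp [hm])
    have huv : u ≠ v := fun h => hvs' (h ▸ hus)
    have hr2 : run (Val G s L) (Function.update α u c) l := hrun.2
    have hhead := run_head hr2
    have key : ∀ (j' : ℕ), (G.Adj v u → c ≠ α v) → α v ∉ (tg G v l).take j' →
       ∃ l' : List (Fin n × Fin k), run (Val G (insert v s) L) α ((u,c) :: l') ∧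
        (∀ m ∈ (u,c) :: l', m.1 ∈ insert v s) ∧
        (∀ w, w ≠ v → fin α ((u,c)::l') w = fin α ((u,c)::l) w) ∧
        (∀ w, w ≠ v → (((u,c)::l').map Prod.fst).count w = (((u,c)::l).map Prod.fst).count w) ∧
        a * (((u,c)::l').map Prod.fst).count v ≤ ((tg G v l).length - j') + (a - 1) := by
      intro j' hc hj'
      have hα2 : Val G (insert v s) L (Function.update α u c) := by
        apply val_insert hhead
        · rw [Function.update_of_ne huv.symm]; exact hα.2 v (by simp)
        · intro w hw hadj
          rw [Function.update_of_ne huv.symm]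
          by_cases hwu : w = u
          · subst hwu; simpa using hc hadj
          · rw [Function.update_of_ne hwu]
            exact hα.1 w (by simp [hw]) v (by simp) hadj.symm
      obtain ⟨l', h1, h2, h3, h4, h5⟩ := ih j' _ hα2 hr2 hs'
        (by rw [Function.update_of_ne huv.symm]; exact hj')
      refine ⟨l', ⟨hα, h1⟩, ?_, h3, ?_, ?_⟩
      · intro m hm
        rcases List.mem_cons.1 hm with rfl | hm
        · simp [hus]
        · exact h2 m hm
      · intro w hw
        simp only [List.map_cons, List.count_cons, h4 w hw]
      · simpa only [List.map_cons, List.count_cons, beq_iff_eq, huv, if_false, add_zero] using h5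
    by_cases hadj : G.Adj v u
    · have htg : tg G v ((u,c)::l) = c :: tg G v l := by simp [tg, hadj]
      by_cases hc : c = α v
      · -- forced recolouring
        have hj0 : j = 0 := by
          by_contra h
          obtain ⟨j', rfl⟩ := Nat.exists_eq_succ_of_ne_zero h
          apply hj
          rw [htg, hc]; simp
        subst hj0
        obtain ⟨x, hxL, hx⟩ : ∃ x ∈ L v, x ∉ (nb G s v).image α ∪
            ((tg G v ((u,c)::l)).take a).toFinset := by
          apply Finset.exists_mem_notMem_of_card_lt_card
          calc _ ≤ _ := card_union_le _ _
            _ ≤ (nb G s v).card + a := by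
              apply add_le_add card_image_le
              exact (List.toFinset_card_le _).trans (List.length_take_le _ _)
            _ < _ := by omega
        simp only [mem_union, not_or, List.mem_toFinset, mem_image, not_exists, not_and] at hx
        obtain ⟨hx1, hx2⟩ := hx
        have hnbr : ∀ w ∈ s, G.Adj v w → α w ≠ x := fun w hw hvw =>
          hx1 w (by simp [nb, hw, hvw, hvs w hw])
        obtain ⟨b, rfl⟩ := Nat.exists_eq_succ_of_ne_zero ha.ne'
        rw [htg] at hx2
        simp only [Nat.succ_eq_add_one, List.take_succ_cons, List.mem_cons, not_or] at hx2
        have hagree : ∀ w ∈ s, α w = Function.update α v x w := fun w hw => by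
          rw [Function.update_of_ne]; rintro rfl; exact hvs' hw
        have hβ : Val G (insert v s) L (Function.update α v x) := by
          apply val_insert (run_head (run_congr hagree hrun))
          · simpa using hxL
          · intro w hw hvw
            rw [← hagree w hw]
            simpa using hnbr w hw hvw
        have hrunβ := run_congr hagree hrun
        have hβ2 : Val G (insert v s) L (Function.update (Function.update α v x) u c) := by
          apply val_insert (run_head hrunβ.2)
          · rw [Function.update_of_ne huv.symm]; simpa using hxL
          · intro w hw hvw
            rw [Function.update_of_ne huv.symm]
            by_cases hwu : w = u
            · subst hwu; simpa using fun h => hx2.1 h.symm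
            · rw [Function.update_of_ne hwu, ← hagree w hw]
              simpa using hnbr w hw hvw
        obtain ⟨l', h1, h2, h3, h4, h5⟩ := ih b _ hβ2 hrunβ.2 hs'
          (by rw [Function.update_of_ne huv.symm]; simpa using hx2.2)
        refine ⟨(v,x)::(u,c)::l', ⟨hα, hβ, h1⟩, ?_, ?_, ?_, ?_⟩
        · intro m hm
          rcases List.mem_cons.1 hm with rfl | hm
          · simp
          rcases List.mem_cons.1 hm with rfl | hm
          · simp [hus]
          · exact h2 m hm
        · intro w hw
          have : ∀ (l : List (Fin n × Fin k)) (α α' : Fin n → Fin k), (∀ w, w ≠ v → α w = α' w) →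
              ∀ w, w ≠ v → fin α l w = fin α' l w := by
            intro l
            induction l with
            | nil => intro α α' h; exact h
            | cons m l ihl =>
              intro α α' h
              apply ihl
              intro w hw
              simp only [Function.update_apply, h w hw]
          simp only [fin]
          rw [h3 w hw]
          apply this _ _ _ _ w hw
          intro w hw
          simp only [Function.update_apply, hw, if_false]
        · intro w hw
          simp only [List.map_cons, List.count_cons, h4 w hw, beq_iff_eq, hw.symm, if_false, add_zero]
        · simp only [List.map_cons, List.count_cons, beq_iff_eq, huv, if_false, if_true, add_zero, htg,
            List.length_cons, Nat.succ_eq_add_one, mul_add, mul_one] at h5 ⊢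
          set q := (b+1) * (l'.map Prod.fst).count v with hq
          rcases Nat.lt_or_ge (tg G v l).length b with hlt | hge
          · have : (l'.map Prod.fst).count v = 0 := by
              by_contra hne
              have : (b+1) * 1 ≤ q := Nat.mul_le_mul_left _ (Nat.one_le_iff_ne_zero.2 hne)
              omega
            rw [this] at hq
            omega
          · omega
      · obtain ⟨l', h1, h2, h3, h4, h5⟩ := key (j-1) (fun _ => hc) (by
          cases j with
          | zero => simp
          | succ j =>
            rw [htg] at hj
            simp only [List.take_succ_cons, List.mem_cons, not_or] at hj
            simpa using hj.2)
        refine ⟨_, h1, h2, h3, h4, h5.trans ?_⟩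
        rw [htg, List.length_cons]; omega
    · have htg : tg G v ((u,c)::l) = tg G v l := by simp [tg, hadj]
      rw [htg] at hj ⊢
      obtain ⟨l', h1, h2, h3, h4, h5⟩ := key j (fun h => absurd h hadj) hj
      exact ⟨_, h1, h2, h3, h4, h5⟩

lemma tg_length (G : SimpleGraph (Fin n)) (s : Finset (Fin n)) (v : Fin n)
    (hvs : ∀ w ∈ s, v < w) (a : ℕ) (l : List (Fin n × Fin k))
    (hl : ∀ m ∈ l, m.1 ∈ s) (hc : ∀ u, (l.map Prod.fst).count u ≤ a) :
    (tg G v l).length ≤ (nb G s v).card * a := by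
  have h1 : (tg G v l).length = ∑ u ∈ nb G s v, (l.map Prod.fst).count u := by
    clear hc
    induction l with
    | nil => simp [tg]
    | cons m l ih =>
      have ih := ih (fun m hm => hl m (by simp [hm]))
      have hm := hl m (by simp)
      simp only [List.map_cons, List.count_cons, sum_add_distrib, ← ih, beq_iff_eq]
      rw [Finset.sum_ite_eq]
      by_cases h : G.Adj v m.1
      · simp [tg, h, nb, hm, hvs _ hm]
      · simp [tg, h, nb]
  rw [h1]
  calc _ ≤ ∑ u ∈ nb G s v, a := sum_le_sum fun u _ => hc u
    _ = _ := by simp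

lemma nb_mono (G : SimpleGraph (Fin n)) {s t : Finset (Fin n)} (h : s ⊆ t) (v) :
    (nb G s v).card ≤ (nb G t v).card :=
  card_le_card (filter_subset_filter _ h)

lemma nb_insert (G : SimpleGraph (Fin n)) (s : Finset (Fin n)) (v) :
    nb G (insert v s) v = nb G s v := by
  ext w; simp only [nb, mem_filter, mem_insert]
  constructor
  · rintro ⟨rfl | h, h'⟩
    · exact absurd h'.1 (lt_irrefl _)
    · exact ⟨h, h'⟩
  · rintro ⟨h, h'⟩; exact ⟨Or.inr h, h'⟩

lemma val_sub {G : SimpleGraph (Fin n)} {s t : Finset (Fin n)} {L : Fin n → Finset (Fin k)}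
    {α : Fin n → Fin k} (hst : s ⊆ t) (h : Val G t L α) : Val G s L α :=
  ⟨fun u hu v hv => h.1 u (hst hu) v (hst hv), fun v hv => h.2 v (hst hv)⟩

lemma bp (G : SimpleGraph (Fin n)) (L : Fin n → Finset (Fin k)) (a : ℕ) (P : Finset (Fin n)) :
    (∀ v ∈ P, (nb G P v).card + 1 + a ≤ (L v).card) → (∀ v ∈ P, (nb G P v).card + 1 ≤ a) →
    ∀ α β : Fin n → Fin k, Val G P L α → Val G P L β → (∀ v, v ∉ P → α v = β v) →
    ∃ l : List (Fin n × Fin k), run (Val G P L) α l ∧ (∀ m ∈ l, m.1 ∈ P) ∧ fin α l = β ∧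
      ∀ u, (l.map Prod.fst).count u ≤ a := by
  induction P using Finset.induction_on_min with
  | empty =>
    intro _ _ α β hα _ h
    refine ⟨[], hα, by simp, ?_, by simp⟩
    funext v; exact h v (by simp)
  | insert v s hvs ih =>
    intro h1 h2 α β hα hβ hab
    have hvs' : v ∉ s := fun h => lt_irrefl _ (hvs v h)
    have hsub : s ⊆ insert v s := subset_insert _ _
    obtain ⟨l, r1, r2, r3, r4⟩ := ih
      (fun u hu => by have := h1 u (hsub hu); have := nb_mono G hsub u; omega)
      (fun u hu => by have := h2 u (hsub hu); have := nb_mono G hsub u; omega)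
      α (Function.update β v (α v)) (val_sub hsub hα) (by
        have := run_congr (G := G) (L := L) (P := s) (α := β) (α' := Function.update β v (α v)) (l := [])
          (fun u hu => by rw [Function.update_of_ne]; rintro rfl; exact hvs' hu) (val_sub hsub hβ)
        exact this)
      (fun u hu => by
        by_cases huv : u = v
        · subst huv; simp
        · rw [Function.update_of_ne huv]; exact hab u (by simp [huv, hu]))
    have e1 := h1 v (by simp)
    have e2 := h2 v (by simp)
    rw [nb_insert] at e1 e2
    have ha : 0 < a := by omega
    obtain ⟨l', q1, q2, q3, q4, q5⟩ := insert_path G L s v hvs a ha e1 l 0 α hα r1 r2 (by simp)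
    have ht := tg_length G s v hvs a l r2 r4
    have hfin : Function.update (fin α l') v (β v) = β := by
      funext u
      by_cases huv : u = v
      · subst huv; simp
      · rw [Function.update_of_ne huv, q3 u huv, r3, Function.update_of_ne huv]
    refine ⟨l' ++ [(v, β v)], run_append q1 ⟨run_last q1, ?_⟩, ?_, ?_, ?_⟩
    · simp only [hfin]; exact hβ
    · intro m hm
      rcases List.mem_append.1 hm with hm | hm
      · exact q2 m hm
      · simp at hm; subst hm; simp
    · rw [fin_append]; exact hfin
    · intro u
      rw [List.map_append, List.count_append]
      by_cases huv : u = v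
      · subst huv
        have : (l'.map Prod.fst).count u ≤ (nb G s u).card := by
          by_contra hlt
          have : a * ((nb G s u).card + 1) ≤ a * (l'.map Prod.fst).count u :=
            Nat.mul_le_mul_left _ (by omega)
          rw [mul_add, mul_comm a (nb G s u).card] at this
          omega
        simp; omega
      · rw [q4 u huv]
        have := r4 u
        simpa [List.count_singleton, Ne.symm huv] using this

lemma greedy (G : SimpleGraph (Fin n)) (L : Fin n → Finset (Fin k)) (γ : Fin n → Fin k)
    (P : Finset (Fin n)) : (∀ v ∈ P, (nb G P v).card + 1 ≤ (L v).card) →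
    ∃ β, Val G P L β ∧ ∀ v, v ∉ P → γ v = β v := by
  induction P using Finset.induction_on_min with
  | empty => intro _; exact ⟨γ, ⟨by simp, by simp⟩, by simp⟩
  | insert v s hvs ih =>
    intro h
    have hvs' : v ∉ s := fun h => lt_irrefl _ (hvs v h)
    have hsub : s ⊆ insert v s := subset_insert _ _
    obtain ⟨β, b1, b2⟩ := ih
      (fun u hu => by have := h u (hsub hu); have := nb_mono G hsub u; omega)
    have e1 := h v (by simp)
    rw [nb_insert] at e1
    obtain ⟨x, hx, hx'⟩ : ∃ x ∈ L v, x ∉ (nb G s v).image β := by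
      apply Finset.exists_mem_notMem_of_card_lt_card
      have : ((nb G s v).image β).card ≤ _ := card_image_le
      omega
    have hag : ∀ u ∈ s, β u = Function.update β v x u := fun u hu => by
      rw [Function.update_of_ne]; rintro rfl; exact hvs' hu
    refine ⟨Function.update β v x, val_insert ?_ (by simpa using hx) ?_, ?_⟩
    · exact (run_congr (l := []) hag b1 : run _ _ [])
    · intro w hw hvw
      rw [← hag w hw]
      simp only [Function.update_self]
      intro he
      exact hx' (mem_image.2 ⟨w, by simp [nb, hw, hvw, hvs w hw], he⟩)
    · intro u hu
      rw [mem_insert, not_or] at hu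
      rw [Function.update_of_ne hu.1]; exact b2 u hu.2

lemma fill (G : SimpleGraph (Fin n)) (L : Fin n → Finset (Fin k)) (α : Fin n → Fin k)
    (hα : IsListColoring G L α) (R : Finset (Fin k)) (hR : ∀ v, α v ∉ R) (P : Finset (Fin n)) :
    ∃ l : List (Fin n × Fin k), run (IsListColoring G L) α l ∧ l.length ≤ P.card ∧
      (∀ v, v ∉ P → fin α l v = α v) ∧
      ∀ v ∈ P, fin α l v ∈ R ∨ ∀ c ∈ R, c ∈ L v → ∃ w, v < w ∧ G.Adj v w ∧ fin α l w = c := by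
  induction P using Finset.induction_on_min with
  | empty => exact ⟨[], hα, by simp, by simp [fin], by simp⟩
  | insert v s hvs ih =>
    have hvs' : v ∉ s := fun h => lt_irrefl _ (hvs v h)
    obtain ⟨l, h1, h2, h3, h4⟩ := ih
    by_cases hc : ∀ c ∈ R, c ∈ L v → ∃ w, v < w ∧ G.Adj v w ∧ fin α l w = c
    · refine ⟨l, h1, by rw [card_insert_of_notMem hvs']; omega, ?_, ?_⟩
      · intro u hu; exact h3 u (fun h => hu (mem_insert_of_mem h))
      · intro u hu
        rcases mem_insert.1 hu with rfl | hu
        · exact Or.inr hc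
        · exact h4 u hu
    · push Not at hc
      obtain ⟨c, hcR, hcL, hcw⟩ := hc
      have hQ := run_last h1
      have hnb : ∀ w, G.Adj v w → fin α l w ≠ c := by
        intro w hw
        by_cases hvw : v < w
        · exact hcw w hvw hw
        · rw [h3 w (fun h => hvw (hvs w h))]
          rintro rfl; exact hR w hcR
      have hQ' : IsListColoring G L (Function.update (fin α l) v c) := by
        refine ⟨?_, ?_⟩
        · intro x y hxy
          by_cases hx : x = v
          · subst hx
            rw [Function.update_self, Function.update_of_ne hxy.ne.symm]
            exact (hnb y hxy).symm
          · by_cases hy : y = v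
            · subst hy
              rw [Function.update_self, Function.update_of_ne hx]
              exact hnb x hxy.symm
            · rw [Function.update_of_ne hx, Function.update_of_ne hy]; exact hQ.1 x y hxy
        · intro x
          by_cases hx : x = v
          · subst hx; simpa using hcL
          · rw [Function.update_of_ne hx]; exact hQ.2 x
      have hf : fin α (l ++ [(v,c)]) = Function.update (fin α l) v c := by
        rw [fin_append]; rfl
      refine ⟨l ++ [(v,c)], run_append h1 ⟨hQ, hQ'⟩, ?_, ?_, ?_⟩
      · rw [card_insert_of_notMem hvs']; simpa using h2
      · intro u hu
        rw [mem_insert, not_or] at hu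
        rw [hf, Function.update_of_ne hu.1]; exact h3 u hu.2
      · intro u hu
        rw [hf]
        rcases mem_insert.1 hu with rfl | hu
        · left; simpa using hcR
        · have huv : u ≠ v := fun h => hvs' (h ▸ (by assumption : u ∈ s))
          rw [Function.update_of_ne huv]
          refine (h4 u hu).imp id ?_
          intro h d hd hdL
          obtain ⟨w, w1, w2, w3⟩ := h d hd hdL
          refine ⟨w, w1, w2, ?_⟩
          rw [Function.update_of_ne]; exact w3
          exact ((hvs u hu).trans w1).ne'

lemma length_le (l : List (Fin n × Fin k)) (a : ℕ) (h : ∀ u, (l.map Prod.fst).count u ≤ a) :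
    l.length ≤ a * n := by
  have h1 : l.length = ∑ u : Fin n, (l.map Prod.fst).count u := by
    clear h
    induction l with
    | nil => simp
    | cons m l ih =>
      simp only [List.map_cons, List.count_cons, sum_add_distrib, ← ih, beq_iff_eq]
      simp
  rw [h1]
  calc _ ≤ ∑ u : Fin n, a := sum_le_sum fun u _ => h u
    _ = _ := by simp [mul_comm]

lemma round (G : SimpleGraph (Fin n)) (L : Fin n → Finset (Fin k)) (a : ℕ)
    (hL : ∀ v, (nb G univ v).card + 1 + a ≤ (L v).card)
    (α : Fin n → Fin k) (hα : IsListColoring G L α) (R S' : Finset (Fin k))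
    (hR : ∀ v, α v ∉ R) (hd : Disjoint R S') (hS : S'.card ≤ a) (hk : k ≤ R.card + 2 * a) :
    ∃ l : List (Fin n × Fin k), run (IsListColoring G L) α l ∧ l.length ≤ (a + 1) * n ∧
      ∀ v, fin α l v ∉ S' := by
  obtain ⟨l₁, f1, f2, -, f4⟩ := fill G L α hα R hR univ
  set γ := fin α l₁ with hγ
  have hγv : IsListColoring G L γ := run_last f1
  set H : Finset (Fin n) := univ.filter fun v => γ v ∉ R with hH
  have hmH : ∀ v, v ∈ H ↔ γ v ∉ R := fun v => by simp [hH]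
  set L' : Fin n → Finset (Fin k) := fun v => L v \ R with hL'
  have hcard : ∀ v ∈ H, (nb G H v).card + 1 + a ≤ (L' v).card := by
    intro v hv
    have hfull := (f4 v (mem_univ _)).resolve_left ((hmH v).1 hv)
    have hsub : L v ∩ R ⊆ (nb G univ v \ nb G H v).image γ := by
      intro c hc
      rw [mem_inter] at hc
      obtain ⟨w, w1, w2, w3⟩ := hfull c hc.2 hc.1
      refine mem_image.2 ⟨w, ?_, w3⟩
      simp only [nb, mem_sdiff, mem_filter, mem_univ, true_and, not_and]
      refine ⟨⟨w1, w2⟩, fun hw => absurd hc.2 ?_⟩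
      rw [← w3]; exact (hmH w).1 hw
    have c1 := (card_le_card hsub).trans card_image_le
    have hss : nb G H v ⊆ nb G univ v := filter_subset_filter _ (subset_univ _)
    rw [card_sdiff_of_subset hss] at c1
    have c2 := card_le_card hss
    have c3 : (L v \ R).card + (L v ∩ R).card = (L v).card := card_sdiff_add_card_inter _ _
    have := hL v
    simp only [hL']
    omega
  have hdeg : ∀ v ∈ H, (nb G H v).card + 1 ≤ a := by
    intro v hv
    have h1 := hcard v hv
    have h2 : (L' v).card + R.card ≤ k := by
      rw [← card_union_of_disjoint (sdiff_disjoint)]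
      exact (card_le_univ _).trans (by simp)
    omega
  obtain ⟨β, b1, b2⟩ := greedy G (fun v => L' v \ S') γ H (by
    intro v hv
    have h1 := hcard v hv
    have h2 := le_card_sdiff S' (L' v)
    show _ ≤ (L' v \ S').card
    omega)
  have hβ : Val G H L' β := ⟨b1.1, fun v hv => (mem_sdiff.1 (b1.2 v hv)).1⟩
  have hγH : Val G H L' γ := ⟨fun u _ v _ h => hγv.1 u v h, fun v hv =>
    mem_sdiff.2 ⟨hγv.2 v, (hmH v).1 hv⟩⟩
  obtain ⟨l₂, p1, p2, p3, p4⟩ := bp G L' a H hcard hdeg γ β hγH hβ b2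
  refine ⟨l₁ ++ l₂, run_append f1 ?_, ?_, ?_⟩
  · refine run_mono (I := fun δ => ∀ v, v ∉ H → δ v = γ v) p1 (fun _ _ => rfl) ?_ ?_
    · intro δ m hm hδ v hv
      rw [Function.update_of_ne]
      · exact hδ v hv
      · rintro rfl; exact hv (p2 m hm)
    · intro δ hδ hI
      have hout : ∀ v, v ∉ H → δ v ∈ R := fun v hv => by
        rw [hI v hv]; by_contra h; exact hv ((hmH v).2 h)
      have hin : ∀ v, v ∈ H → δ v ∉ R := fun v hv => (mem_sdiff.1 (hδ.2 v hv)).2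
      refine ⟨?_, ?_⟩
      · intro u v huv
        by_cases hu : u ∈ H <;> by_cases hv : v ∈ H
        · exact hδ.1 u hu v hv huv
        · exact fun h => hin u hu (h ▸ hout v hv)
        · exact fun h => hin v hv (h ▸ hout u hu)
        · rw [hI u hu, hI v hv]; exact hγv.1 u v huv
      · intro v
        by_cases hv : v ∈ H
        · exact (mem_sdiff.1 (hδ.2 v hv)).1
        · rw [hI v hv]; exact hγv.2 v
  · have := length_le l₂ a p4
    rw [List.length_append, add_mul]
    simp at f2
    omega
  · intro v
    rw [fin_append, ← hγ, p3]
    by_cases hv : v ∈ H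
    · exact (mem_sdiff.1 (b1.2 v hv)).2
    · rw [← b2 v hv]
      have : γ v ∈ R := by by_contra h; exact hv ((hmH v).2 h)
      exact fun h => disjoint_left.1 hd this h

lemma main (G : SimpleGraph (Fin n)) (L : Fin n → Finset (Fin k))
    (hL : ∀ v, (nb G univ v).card + 1 + (k + 2) / 3 ≤ (L v).card)
    (α : Fin n → Fin k) (hα : IsListColoring G L α) (S S' : Finset (Fin k))
    (hS : S.card = (k + 2) / 3) (hav : ∀ v, α v ∉ S) (hS' : S'.card = (k + 2) / 3) :
    ∃ l : List (Fin n × Fin k), run (IsListColoring G L) α l ∧ 3 * l.length ≤ (4 * k + 12) * n ∧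
      ∀ v, fin α l v ∉ S' := by
  have c3 : (S \ S').card + (S ∩ S').card = S.card := card_sdiff_add_card_inter _ _
  have c4 : (S ∪ S').card + (S ∩ S').card = S.card + S'.card := card_union_add_card_inter _ _
  by_cases hp : (S ∩ S').card + k ≤ 3 * ((k + 2) / 3)
  · obtain ⟨l, l1, l2, l3⟩ := round G L _ hL α hα (S \ S') S'
      (fun v h => hav v (mem_sdiff.1 h).1) sdiff_disjoint hS'.le (by omega)
    refine ⟨l, l1, ?_, l3⟩
    calc 3 * l.length ≤ 3 * (((k + 2) / 3 + 1) * n) := by omega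
      _ = (3 * ((k + 2) / 3 + 1)) * n := by ring
      _ ≤ _ := Nat.mul_le_mul_right _ (by omega)
  · obtain ⟨X, hX, hXc⟩ : ∃ X ⊆ (S ∪ S')ᶜ, X.card = (k + 2) / 3 := by
      apply Finset.exists_subset_card_eq
      rw [card_compl, Fintype.card_fin]
      omega
    have hd : Disjoint (S ∪ S') X := by
      rw [disjoint_left]; intro x hx hx'; exact (mem_compl.1 (hX hx')) hx
    rw [disjoint_union_left] at hd
    obtain ⟨l, l1, l2, l3⟩ := round G L _ hL α hα S X hav hd.1 hXc.le (by omega)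
    obtain ⟨l', l1', l2', l3'⟩ := round G L _ hL (fin α l) (run_last l1) X S' l3 hd.2.symm hS'.le
      (by omega)
    refine ⟨l ++ l', run_append l1 l1', ?_, by rw [fin_append]; exact l3'⟩
    rw [List.length_append]
    calc 3 * (l.length + l'.length) ≤ 6 * (((k + 2) / 3 + 1) * n) := by omega
      _ = (6 * ((k + 2) / 3 + 1)) * n := by ring
      _ ≤ _ := Nat.mul_le_mul_right _ (by omega)

end
end AvoidCol

/-- Given a graph `G` on `n` vertices, `k` colours, a `⌈k/3⌉`-feasible list
assignment `L` and an `L`-colouring `α` avoiding a set `S` of `⌈k/3⌉` colours,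
for any set `S'` of `⌈k/3⌉` colours there is an `L`-colouring `β` avoiding `S'`
and a recolouring sequence from `α` to `β` of length at most `((4k+12)/3) n`. -/
theorem avoid_colours_recolouring (n k : ℕ) (G : SimpleGraph (Fin n))
    (L : Fin n → Finset (Fin k))
    (hfeasible : ∃ e : Fin n ≃ Fin n, ∀ i : Fin n,
      {j : Fin n | i < j ∧ G.Adj (e i) (e j)}.ncard + 1 + (k + 2) / 3 ≤ (L (e i)).card)
    (α : Fin n → Fin k) (hα : IsListColoring G L α)
    (S : Finset (Fin k)) (hScard : S.card = (k + 2) / 3) (havoid : ∀ v, α v ∉ S)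
    (S' : Finset (Fin k)) (hS'card : S'.card = (k + 2) / 3) :
    ∃ (β : Fin n → Fin k) (m : ℕ) (γ : ℕ → Fin n → Fin k),
      (∀ v, β v ∉ S') ∧
      γ 0 = α ∧ γ m = β ∧
      (∀ i ≤ m, IsListColoring G L (γ i)) ∧
      (∀ i < m, ∃ v, γ i v ≠ γ (i + 1) v ∧ ∀ w, w ≠ v → γ i w = γ (i + 1) w) ∧
      3 * m ≤ (4 * k + 12) * n := by
  obtain ⟨e, he⟩ := hfeasible
  obtain ⟨l, h1, h2, h3⟩ := AvoidCol.main (G.comap e) (L ∘ e) (by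
      classical
      intro v
      have h := he v
      rw [Set.ncard_eq_toFinset_card'] at h
      refine le_trans (le_of_eq ?_) h
      congr 3
      ext w
      simp [AvoidCol.nb]) (α ∘ e)
    ⟨fun u v h => hα.1 _ _ h, fun v => hα.2 _⟩ S S' hScard (fun v => havoid _) hS'card
  obtain ⟨m, γ, g1, g2, g3, g4, g5⟩ := AvoidCol.run_seq h1
  refine ⟨γ m ∘ e.symm, m, fun i => γ i ∘ e.symm, ?_, ?_, rfl, ?_, ?_, ?_⟩
  · intro v; rw [g3]; exact h3 _
  · funext v; simp [g2]
  · intro i hi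
    refine ⟨fun u v huv => (g4 i hi).1 _ _ (by simpa using huv), fun v => ?_⟩
    simpa using (g4 i hi).2 (e.symm v)
  · intro i hi
    obtain ⟨v, v1, v2⟩ := g5 i hi
    refine ⟨e v, by simpa using v1, fun w hw => v2 _ ?_⟩
    intro h; apply hw; simp [← h]
  · omega
end

section
/- For every integer k ≥ 0, the oriented graph B⃗_k is k-out-degenerate and has dichromatic number exactly k + 1, where B⃗_0 is the single-vertex oriented graph and, for k ≥ 1, B⃗_k is obtained from two disjoint copies B⃗¹ and B⃗² of B⃗_{k−1} and one new vertex r by adding all arcs from r to B⃗¹, all arcs from B⃗¹ to B⃗², and all arcs from B⃗² to r. -/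
/-- The vertex set of the oriented graph `B⃗_k`: `B⃗_0` is a single vertex and
`B⃗_{k+1}` consists of two disjoint copies of `B⃗_k` together with a new vertex
`r` (encoded as `none`). -/
def Bvert : ℕ → Type
  | 0 => PUnit
  | k + 1 => Option (Bvert k ⊕ Bvert k)

/-- The arcs of `B⃗_k`: in `B⃗_{k+1}`, all arcs from `r` to the first copy, from
the first copy to the second, and from the second copy to `r`, together with the
arcs inside the two copies. -/
def Barc : (k : ℕ) → Bvert k → Bvert k → Prop
  | 0 => fun _ _ => False
  | k + 1 => fun a b =>
      match a, b with
      | none, some (Sum.inl _) => True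
      | some (Sum.inl x), some (Sum.inl y) => Barc k x y
      | some (Sum.inl _), some (Sum.inr _) => True
      | some (Sum.inr x), some (Sum.inr y) => Barc k x y
      | some (Sum.inr _), none => True
      | _, _ => False

theorem Bvert_finite (k : ℕ) : Finite (Bvert k) := by
  induction k with
  | zero => exact inferInstanceAs (Finite PUnit)
  | succ k ih => exact inferInstanceAs (Finite (Option (Bvert k ⊕ Bvert k)))

theorem Barc_oriented (k : ℕ) : Oriented (Barc k) := by
  induction k with
  | zero => intro u v h; exact h.elim
  | succ k ih =>
    intro u v h h'
    rcases u with _ | u | u <;> rcases v with _ | v | v <;>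
      first
        | exact h
        | exact h'
        | exact ih u v h h'

theorem Barc_deg (k : ℕ) : ∀ S : Set (Bvert k), S.Nonempty →
    ∃ v ∈ S, outDegOn (Barc k) S v ≤ k := by
  induction k with
  | zero =>
    rintro S ⟨v, hv⟩
    refine ⟨v, hv, ?_⟩
    have : {w ∈ S | Barc 0 v w} = ∅ := by
      ext w; constructor
      · rintro ⟨_, h⟩; exact h.elim
      · intro h; exact h.elim
    simp [outDegOn, this]
  | succ k ih =>
    intro S hS
    have := Bvert_finite k
    have := Bvert_finite (k + 1)
    let i1 : Bvert k → Bvert (k + 1) := fun x => some (Sum.inl x)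
    let i2 : Bvert k → Bvert (k + 1) := fun x => some (Sum.inr x)
    let r : Bvert (k + 1) := none
    by_cases h2 : (i2 ⁻¹' S).Nonempty
    · obtain ⟨v, hv, hd⟩ := ih _ h2
      refine ⟨i2 v, hv, ?_⟩
      have hsub : {w ∈ S | Barc (k + 1) (i2 v) w} ⊆
          insert r (i2 '' {w ∈ i2 ⁻¹' S | Barc k v w}) := by
        rintro (_ | w | w) ⟨hw, ha⟩
        · exact Or.inl rfl
        · exact ha.elim
        · exact Or.inr ⟨w, ⟨hw, ha⟩, rfl⟩
      calc _ ≤ _ := Set.ncard_le_ncard hsub (Set.toFinite _)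
        _ ≤ _ := Set.ncard_insert_le _ _
        _ ≤ k + 1 := Nat.add_le_add_right ((Set.ncard_image_le (Set.toFinite _)).trans hd) 1
    · by_cases h1 : (i1 ⁻¹' S).Nonempty
      · obtain ⟨v, hv, hd⟩ := ih _ h1
        refine ⟨i1 v, hv, ?_⟩
        have hsub : {w ∈ S | Barc (k + 1) (i1 v) w} ⊆
            (i1 '' {w ∈ i1 ⁻¹' S | Barc k v w}) := by
          rintro (_ | w | w) ⟨hw, ha⟩
          · exact ha.elim
          · exact ⟨w, ⟨hw, ha⟩, rfl⟩
          · exact (h2 ⟨w, hw⟩).elim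
        calc _ ≤ _ := Set.ncard_le_ncard hsub (Set.toFinite _)
          _ ≤ _ := (Set.ncard_image_le (Set.toFinite _))
          _ ≤ k + 1 := hd.trans (Nat.le_succ k)
      · obtain ⟨v, hv⟩ := hS
        refine ⟨v, hv, ?_⟩
        have : {w ∈ S | Barc (k + 1) v w} = ∅ := by
          apply Set.eq_empty_of_forall_notMem
          rintro w ⟨hw, ha⟩
          rcases v with _ | v | v
          · rcases w with _ | w | w
            · exact ha
            · exact h1 ⟨w, hw⟩
            · exact ha
          · exact h1 ⟨v, hv⟩
          · exact h2 ⟨v, hv⟩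
        simp [outDegOn, this]

theorem Barc_col (k : ℕ) : ∃ (α : Bvert k → Fin (k + 1)) (f : Bvert k → ℕ) (M : ℕ),
    (∀ x, f x < M) ∧ ∀ x y, Barc k x y → α x = α y → f x < f y := by
  induction k with
  | zero => exact ⟨fun _ => 0, fun _ => 0, 1, fun _ => Nat.one_pos, fun _ _ h => h.elim⟩
  | succ k ih =>
    obtain ⟨α, f, M, hM, hf⟩ := ih
    refine ⟨fun x => match x with
      | none => Fin.last (k + 1)
      | some (Sum.inl x) => (α x).castSucc
      | some (Sum.inr x) => (α x).castSucc, fun x => match x with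
      | none => 0
      | some (Sum.inl x) => f x
      | some (Sum.inr x) => f x + M, M + M + 1, ?_, ?_⟩
    · rintro (_ | x | x)
      · exact Nat.succ_pos _
      · have := hM x
        show f x < _
        omega
      · have := hM x
        show f x + M < _
        omega
    · rintro (_ | x | x) (_ | y | y) h hc
      · exact h.elim
      · exact absurd hc.symm (Fin.castSucc_lt_last (α y)).ne
      · exact h.elim
      · exact h.elim
      · exact hf x y h (Fin.castSucc_injective _ hc)
      · have := hM x
        show f x < f y + M
        omega
      · exact absurd hc (Fin.castSucc_lt_last (α x)).ne
      · exact h.elim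
      · exact Nat.add_lt_add_right (hf x y h (Fin.castSucc_injective _ hc)) M

theorem dicol_restrict {V W : Type} {D : V → V → Prop} {E : W → W → Prop} {k : ℕ}
    {α : V → Fin (k + 1)} (hα : IsDicolouring D (k + 1) α) (i : W → V)
    (hi : ∀ x y, E x y → D (i x) (i y)) (c : Fin (k + 1)) (hc : ∀ x, α (i x) ≠ c) :
    ∃ β : W → Fin k, IsDicolouring E k β := by
  choose β hβ using fun x => Fin.exists_succAbove_eq (hc x)
  refine ⟨β, fun d v hv => hα (c.succAbove d) (i v) ?_⟩
  refine Relation.TransGen.lift i ?_ _ _ hv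
  rintro a b ⟨h, ha, hb⟩
  exact ⟨hi _ _ h, by rw [← hβ, ha], by rw [← hβ, hb]⟩

theorem Barc_lower (k : ℕ) : ¬ (∃ α : Bvert k → Fin k, IsDicolouring (Barc k) k α) := by
  induction k with
  | zero => rintro ⟨α, -⟩; exact (α PUnit.unit).elim0
  | succ k ih =>
    rintro ⟨α, hα⟩
    let i1 : Bvert k → Bvert (k + 1) := fun x => some (Sum.inl x)
    let i2 : Bvert k → Bvert (k + 1) := fun x => some (Sum.inr x)
    let r : Bvert (k + 1) := none
    by_cases h1 : ∀ x, α (i1 x) ≠ α r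
    · exact ih (dicol_restrict hα i1 (fun _ _ h => h) _ h1)
    by_cases h2 : ∀ x, α (i2 x) ≠ α r
    · exact ih (dicol_restrict hα i2 (fun _ _ h => h) _ h2)
    push Not at h1 h2
    obtain ⟨x, hx⟩ := h1
    obtain ⟨y, hy⟩ := h2
    refine hα (α r) r (Relation.TransGen.head (b := i1 x) ⟨trivial, rfl, hx⟩
      (Relation.TransGen.head (b := i2 y) ⟨trivial, hx, hy⟩
        (Relation.TransGen.single ⟨trivial, hy, rfl⟩)))

/-- For every `k`, the oriented graph `B⃗_k` is `k`-out-degenerate and has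
dichromatic number exactly `k + 1`. -/
theorem Bk_out_degenerate_dichromatic (k : ℕ) :
    Oriented (Barc k) ∧
    (∀ S : Set (Bvert k), S.Nonempty → ∃ v ∈ S, outDegOn (Barc k) S v ≤ k) ∧
    (∃ α : Bvert k → Fin (k + 1), IsDicolouring (Barc k) (k + 1) α) ∧
    ¬ (∃ α : Bvert k → Fin k, IsDicolouring (Barc k) k α) := by
  refine ⟨Barc_oriented k, Barc_deg k, ?_, Barc_lower k⟩
  obtain ⟨α, f, M, -, hf⟩ := Barc_col k
  refine ⟨α, fun c v hv => ?_⟩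
  have h : Relation.TransGen (fun a b : ℕ => a < b) (f v) (f v) :=
    Relation.TransGen.lift f (fun a b h => hf a b h.1 (h.2.1.trans h.2.2.symm)) _ _ hv
  rw [Relation.transGen_eq_self] at h
  exact lt_irrefl _ h
end

section
/- For every n ≥ 3, the oriented graph F⃗_n on 2n vertices described below satisfies: F⃗_n has exactly 4n arcs (so |A(F⃗_n)| = 2|V(F⃗_n)| and Mad(F⃗_n) = 4), and the 2-dicolouring assigning colour 1 to every u_i and colour 2 to every v_i is frozen; in particular F⃗_n is 2-freezable. Here F⃗_n is obtained from the disjoint union of two directed paths (u_1,…,u_n) and (v_1,…,v_n) by adding the arcs {u_i v_i : i ∈ [n]} ∪ {v_{i+1} u_i : i ∈ [n−1]} ∪ {v_1 u_2, u_n v_1, v_{n−1} u_n}. -/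
/-- The oriented graph `F⃗_n` on `Fin n ⊕ Fin n` (with `Sum.inl i = u_{i+1}` and
`Sum.inr i = v_{i+1}`, `0`-indexed): the two directed paths `(u_1,…,u_n)`,
`(v_1,…,v_n)` together with the arcs `u_i v_i` (`i ∈ [n]`), `v_{i+1} u_i`
(`i ∈ [n-1]`), `v_1 u_2`, `u_n v_1` and `v_{n-1} u_n`. -/
def Farc (n : ℕ) : (Fin n ⊕ Fin n) → (Fin n ⊕ Fin n) → Prop
  | Sum.inl i, Sum.inl j => j.val = i.val + 1
  | Sum.inr i, Sum.inr j => j.val = i.val + 1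
  | Sum.inl i, Sum.inr j => i = j ∨ (i.val = n - 1 ∧ j.val = 0)
  | Sum.inr i, Sum.inl j =>
      i.val = j.val + 1 ∨ (i.val = 0 ∧ j.val = 1) ∨ (i.val = n - 2 ∧ j.val = n - 1)


def fArc (n : ℕ) (hn : 3 ≤ n) : (Fin n ⊕ Fin n) × Bool → (Fin n ⊕ Fin n) × (Fin n ⊕ Fin n)
  | (Sum.inl i, true) => (Sum.inl i, Sum.inr i)
  | (Sum.inl i, false) =>
      if h : i.val + 1 < n then (Sum.inl i, Sum.inl ⟨i.val + 1, h⟩)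
      else (Sum.inl i, Sum.inr ⟨0, by omega⟩)
  | (Sum.inr i, true) =>
      if i.val = 0 then (Sum.inr i, Sum.inl ⟨1, by omega⟩)
      else (Sum.inr i, Sum.inl ⟨i.val - 1, by omega⟩)
  | (Sum.inr i, false) =>
      if h : i.val + 2 < n then (Sum.inr i, Sum.inr ⟨i.val + 1, by omega⟩)
      else if i.val + 2 = n then (Sum.inr i, Sum.inl ⟨n - 1, by omega⟩)
      else (Sum.inr ⟨n - 2, by omega⟩, Sum.inr i)

lemma fArc_inj (n : ℕ) (hn : 3 ≤ n) : Function.Injective (fArc n hn) := by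
  rintro ⟨i | i, _ | _⟩ ⟨j | j, _ | _⟩ h <;> simp only [fArc] at h <;>
    (try split_ifs at h) <;> simp [Fin.ext_iff] at h ⊢ <;> omega

lemma fArc_mem (n : ℕ) (hn : 3 ≤ n) (x) : Farc n (fArc n hn x).1 (fArc n hn x).2 := by
  rcases x with ⟨i | i, _ | _⟩ <;> simp only [fArc] <;> (try split_ifs) <;>
    simp [Farc] <;> omega

lemma fArc_surj (n : ℕ) (hn : 3 ≤ n) (a b : Fin n ⊕ Fin n) (h : Farc n a b) :
    ∃ x, (x.1 = a ∨ x.1 = b) ∧ fArc n hn x = (a, b) := by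
  rcases a with i | i <;> rcases b with j | j <;> simp only [Farc] at h
  · refine ⟨(Sum.inl i, false), Or.inl rfl, ?_⟩
    have := j.2
    simp only [fArc]; split_ifs <;> simp [Fin.ext_iff] <;> omega
  · rcases h with h | h
    · exact ⟨(Sum.inl i, true), Or.inl rfl, by simp [fArc, h]⟩
    · refine ⟨(Sum.inl i, false), Or.inl rfl, ?_⟩
      simp only [fArc]; split_ifs <;> simp [Fin.ext_iff] <;> omega
  · rcases h with h | h | h
    · refine ⟨(Sum.inr i, true), Or.inl rfl, ?_⟩
      simp only [fArc]; split_ifs <;> simp [Fin.ext_iff] <;> omega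
    · refine ⟨(Sum.inr i, true), Or.inl rfl, ?_⟩
      simp only [fArc]; split_ifs <;> simp [Fin.ext_iff] <;> omega
    · refine ⟨(Sum.inr i, false), Or.inl rfl, ?_⟩
      simp only [fArc]; split_ifs <;> simp [Fin.ext_iff] <;> omega
  · have := j.2
    by_cases hi : i.val + 2 < n
    · refine ⟨(Sum.inr i, false), Or.inl rfl, ?_⟩
      simp only [fArc]; split_ifs; simp [Fin.ext_iff]; omega
    · refine ⟨(Sum.inr j, false), Or.inr rfl, ?_⟩
      simp only [fArc]; split_ifs <;> simp [Fin.ext_iff] <;> omega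

lemma path_aux {n : ℕ} {V : Type} (r : V → V → Prop) (g : Fin n → V) (a b : ℕ) (hab : a ≤ b)
    (hb : b < n)
    (h : ∀ (k : ℕ) (hk : k + 1 < n), a ≤ k → k + 1 ≤ b → r (g ⟨k, by omega⟩) (g ⟨k + 1, hk⟩)) :
    Relation.ReflTransGen r (g ⟨a, by omega⟩) (g ⟨b, hb⟩) := by
  induction b, hab using Nat.le_induction with
  | base => exact .refl
  | succ m hm ih =>
    exact (ih (by omega) (fun k hk h1 h2 => h k hk h1 (by omega))).tail (h m hb hm le_rfl)

lemma Fn_dicol (n : ℕ) : IsDicolouring (Farc n) 2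
      (Sum.elim (fun _ => (0 : Fin 2)) (fun _ => (1 : Fin 2))) := by
  intro c v hv
  have key : ∀ a b, Relation.TransGen (fun u v => Farc n u v ∧
      (Sum.elim (fun _ => (0 : Fin 2)) (fun _ => (1 : Fin 2)) : Fin n ⊕ Fin n → Fin 2) u = c ∧
      (Sum.elim (fun _ => (0 : Fin 2)) (fun _ => (1 : Fin 2)) : Fin n ⊕ Fin n → Fin 2) v = c) a b →
      Sum.elim (fun i : Fin n => i.val) (fun i : Fin n => i.val) a <
      Sum.elim (fun i : Fin n => i.val) (fun i : Fin n => i.val) b := by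
    have step : ∀ a b, (Farc n a b ∧
      (Sum.elim (fun _ => (0 : Fin 2)) (fun _ => (1 : Fin 2)) : Fin n ⊕ Fin n → Fin 2) a = c ∧
      (Sum.elim (fun _ => (0 : Fin 2)) (fun _ => (1 : Fin 2)) : Fin n ⊕ Fin n → Fin 2) b = c) →
      Sum.elim (fun i : Fin n => i.val) (fun i : Fin n => i.val) a <
      Sum.elim (fun i : Fin n => i.val) (fun i : Fin n => i.val) b := by
      rintro (i | i) (j | j) ⟨h, h1, h2⟩
      · simp [Farc] at *; omega
      · simp at h1 h2; rw [← h1] at h2; exact absurd h2 (by decide)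
      · simp at h1 h2; rw [← h1] at h2; exact absurd h2 (by decide)
      · simp [Farc] at *; omega
    intro a b h
    induction h with
    | single h => exact step _ _ h
    | tail _ h ih => exact ih.trans (step _ _ h)
  exact absurd (key v v hv) (lt_irrefl _)

lemma Fn_frozen (n : ℕ) (hn : 3 ≤ n) : FrozenDicolouring (Farc n) 2
      (Sum.elim (fun _ => (0 : Fin 2)) (fun _ => (1 : Fin 2))) := by
  refine ⟨Fn_dicol n, ?_⟩
  rintro (i | i) c hc h
  · have hc1 : c = 1 := by simp at hc; omega
    subst hc1
    refine h 1 (Sum.inl i) ?_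
    by_cases hi : i.val + 1 < n
    · refine .tail (b := Sum.inr ⟨i.val + 1, hi⟩) (.tail (b := Sum.inr i) (.single ?_) ?_) ?_ <;>
        simp [Farc]
    · refine .tail (b := Sum.inr ⟨n - 2, by omega⟩) (.trans_left
        (.single (b := Sum.inr ⟨0, by omega⟩) ?_)
        (path_aux _ (fun i => Sum.inr i) 0 (n - 2) (by omega) (by omega) ?_)) ?_
      · simp [Farc]; omega
      · intro k hk _ _; simp [Farc]
      · simp [Farc]; omega
  · have hc1 : c = 0 := by simp at hc; omega
    subst hc1
    refine h 0 (Sum.inr i) ?_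
    by_cases hi : 0 < i.val
    · refine .tail (b := Sum.inl i)
        (.tail (b := Sum.inl ⟨i.val - 1, by omega⟩) (.single ?_) ?_) ?_ <;>
        simp [Farc] <;> omega
    · refine .tail (b := Sum.inl ⟨n - 1, by omega⟩) (.trans_left
        (.single (b := Sum.inl ⟨1, by omega⟩) ?_)
        (path_aux _ (fun i => Sum.inl i) 1 (n - 1) (by omega) (by omega) ?_)) ?_
      · simp [Farc]; omega
      · intro k hk _ _; simp [Farc]
      · simp [Farc]; omega

/-- For `n ≥ 3`, `F⃗_n` has exactly `4n` arcs (so `|A| = 2|V|` and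
`Mad(F⃗_n) = 4`, i.e. every nonempty induced subdigraph `H` satisfies
`|A(H)| ≤ 2 |V(H)|` with equality for `F⃗_n` itself), and the `2`-dicolouring
giving colour `1` to every `u_i` and colour `2` to every `v_i` is frozen;
in particular `F⃗_n` is `2`-freezable. -/
theorem Fn_freezable (n : ℕ) (hn : 3 ≤ n) :
    (arcSet (Farc n)).ncard = 4 * n ∧
    (∀ S : Set (Fin n ⊕ Fin n), S.Nonempty →
      (arcSetOn (Farc n) S).ncard ≤ 2 * S.ncard) ∧
    FrozenDicolouring (Farc n) 2
      (Sum.elim (fun _ => (0 : Fin 2)) (fun _ => (1 : Fin 2))) := by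
  refine ⟨?_, ?_, Fn_frozen n hn⟩
  · have : arcSet (Farc n) = fArc n hn '' Set.univ := by
      ext ⟨a, b⟩
      constructor
      · intro h
        obtain ⟨x, _, hx⟩ := fArc_surj n hn a b h
        exact ⟨x, trivial, hx⟩
      · rintro ⟨x, _, hx⟩
        have := fArc_mem n hn x
        rw [hx] at this
        exact this
    rw [this, Set.ncard_image_of_injective _ (fArc_inj n hn), Set.ncard_univ]
    simp; ring
  · intro S _
    have : arcSetOn (Farc n) S ⊆ fArc n hn '' (S ×ˢ (Set.univ : Set Bool)) := by
      rintro ⟨a, b⟩ ⟨ha, hb, h⟩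
      obtain ⟨x, h1, hx⟩ := fArc_surj n hn a b h
      refine ⟨x, ⟨?_, trivial⟩, hx⟩
      rcases h1 with h1 | h1 <;> rw [h1] <;> assumption
    refine (Set.ncard_le_ncard this (Set.toFinite _)).trans ?_
    rw [Set.ncard_image_of_injective _ (fArc_inj n hn), Set.ncard_prod, Set.ncard_univ]
    simp [mul_comm]
end

section
/- For every k ≥ 2 and every n ≥ 3, the oriented graph F⃗_n^k described below is k-freezable and has exactly k·|V(F⃗_n^k)| + k(k−2) arcs, where |V(F⃗_n^k)| = kn; moreover, the dicolouring assigning colour j to all vertices of P_j for each j ∈ [k] is a frozen k-dicolouring. Here F⃗_n^k is obtained from k disjoint directed paths P_1,…,P_k, with P_j = (v^j_1,…,v^j_n), by adding for each pair 1 ≤ j < ℓ ≤ k the arcs {v^j_i v^ℓ_i : i ∈ [n]} ∪ {v^ℓ_{i+1} v^j_i : i ∈ [n−1]} ∪ {v^ℓ_1 v^j_2, v^j_n v^ℓ_1, v^ℓ_{n−1} v^j_n}, so that the subdigraph induced by V(P_j) ∪ V(P_ℓ) is isomorphic to F⃗_n. -/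
/-- The oriented graph `F⃗_n^k` on `Fin k × Fin n`, where `(j, i)` is the vertex
`v^{j+1}_{i+1}` (`0`-indexed): `k` disjoint directed paths `P_1, …, P_k`, and
for each pair `j < ℓ` the arcs `v^j_i v^ℓ_i` (`i ∈ [n]`), `v^ℓ_{i+1} v^j_i`
(`i ∈ [n-1]`), `v^ℓ_1 v^j_2`, `v^j_n v^ℓ_1` and `v^ℓ_{n-1} v^j_n`, so that the
subdigraph induced by `V(P_j) ∪ V(P_ℓ)` is isomorphic to `F⃗_n`. -/
def FKarc (k n : ℕ) (a b : Fin k × Fin n) : Prop :=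
  (a.1 = b.1 ∧ b.2.val = a.2.val + 1) ∨
  (a.1.val < b.1.val ∧ a.2 = b.2) ∨
  (b.1.val < a.1.val ∧
    (a.2.val = b.2.val + 1 ∨ (a.2.val = 0 ∧ b.2.val = 1) ∨
      (a.2.val = n - 2 ∧ b.2.val = n - 1))) ∨
  (a.1.val < b.1.val ∧ a.2.val = n - 1 ∧ b.2.val = 0)

theorem FK_card_succ (m : ℕ) :
    (Finset.univ.filter (fun p : Fin (m+3) × Fin (m+3) => p.2.val = p.1.val + 1)).card = m + 2 := by
  have : (Finset.univ.filter (fun p : Fin (m+3) × Fin (m+3) => p.2.val = p.1.val + 1))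
      = Finset.univ.image (fun i : Fin (m+2) => (i.castSucc, i.succ)) := by
    ext ⟨a, b⟩
    simp only [Finset.mem_filter, Finset.mem_univ, true_and, Finset.mem_image, Prod.mk.injEq]
    constructor
    · intro h
      have hb := b.isLt
      exact ⟨⟨a.val, by omega⟩, by ext; rfl, by ext; simp [h]⟩
    · rintro ⟨i, rfl, rfl⟩; simp
  rw [this, Finset.card_image_of_injective]
  · simp
  · intro a b h
    simpa using (Prod.mk.inj h).1

theorem FK_card_eq (m : ℕ) :
    (Finset.univ.filter (fun p : Fin (m+3) × Fin (m+3) =>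
      p.1 = p.2 ∨ (p.1.val = m + 2 ∧ p.2.val = 0))).card = m + 4 := by
  have : (Finset.univ.filter (fun p : Fin (m+3) × Fin (m+3) =>
      p.1 = p.2 ∨ (p.1.val = m + 2 ∧ p.2.val = 0)))
      = insert ((⟨m+2, by omega⟩, ⟨0, by omega⟩) : Fin (m+3) × Fin (m+3))
        (Finset.univ.image (fun i : Fin (m+3) => (i, i))) := by
    ext ⟨a, b⟩
    simp only [Finset.mem_filter, Finset.mem_univ, true_and, Finset.mem_image, Prod.mk.injEq,
      Finset.mem_insert, Fin.ext_iff]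
    constructor
    · rintro (h | h)
      · exact Or.inr ⟨a, rfl, h⟩
      · exact Or.inl h
    · rintro (h | ⟨i, h1, h2⟩)
      · exact Or.inr h
      · left; omega
  rw [this, Finset.card_insert_of_notMem, Finset.card_image_of_injective]
  · simp
  · intro a b h
    exact (Prod.mk.inj h).1
  · simp only [Finset.mem_image, Finset.mem_univ, true_and, Prod.mk.injEq, Fin.ext_iff]
    rintro ⟨i, h1, h2⟩
    omega

theorem FK_card_back (m : ℕ) :
    (Finset.univ.filter (fun p : Fin (m+3) × Fin (m+3) =>
      p.1.val = p.2.val + 1 ∨ (p.1.val = 0 ∧ p.2.val = 1) ∨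
        (p.1.val = m + 1 ∧ p.2.val = m + 2))).card = m + 4 := by
  have : (Finset.univ.filter (fun p : Fin (m+3) × Fin (m+3) =>
      p.1.val = p.2.val + 1 ∨ (p.1.val = 0 ∧ p.2.val = 1) ∨
        (p.1.val = m + 1 ∧ p.2.val = m + 2)))
      = insert ((⟨m+1, by omega⟩, ⟨m+2, by omega⟩) : Fin (m+3) × Fin (m+3))
        (insert ((⟨0, by omega⟩, ⟨1, by omega⟩) : Fin (m+3) × Fin (m+3))
        ((Finset.univ.filter (fun p : Fin (m+3) × Fin (m+3) => p.2.val = p.1.val + 1)).image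
          Prod.swap)) := by
    ext ⟨a, b⟩
    simp only [Finset.mem_filter, Finset.mem_univ, true_and, Finset.mem_image, Prod.mk.injEq,
      Finset.mem_insert, Fin.ext_iff, Prod.exists, Prod.swap_prod_mk]
    constructor
    · rintro (h | h | h)
      · exact Or.inr (Or.inr ⟨b, a, h, rfl, rfl⟩)
      · exact Or.inr (Or.inl h)
      · exact Or.inl h
    · rintro (h | h | ⟨x, y, h, h1, h2⟩)
      · exact Or.inr (Or.inr h)
      · exact Or.inr (Or.inl h)
      · left; omega
  rw [this, Finset.card_insert_of_notMem, Finset.card_insert_of_notMem,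
    Finset.card_image_of_injective, FK_card_succ]
  · exact Prod.swap_injective
  · simp only [Finset.mem_filter, Finset.mem_univ, true_and, Finset.mem_image, Prod.mk.injEq,
      Finset.mem_insert, Fin.ext_iff, Prod.exists, Prod.swap_prod_mk]
    rintro ⟨x, y, h, h1, h2⟩
    omega
  · simp only [Finset.mem_filter, Finset.mem_univ, true_and, Finset.mem_image, Prod.mk.injEq,
      Finset.mem_insert, Fin.ext_iff, Prod.exists, Prod.swap_prod_mk]
    rintro (h | ⟨x, y, h, h1, h2⟩) <;> omega

theorem FK_card_pair (k m : ℕ) (j l : Fin k) :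
    {p : Fin (m+3) × Fin (m+3) | FKarc k (m+3) (j, p.1) (l, p.2)}.ncard
      = if j = l then m + 2 else m + 4 := by
  split_ifs with h
  · subst h
    rw [← FK_card_succ m, ← Set.ncard_coe_finset]
    congr 1
    ext p
    simp [FKarc]
  · rcases lt_or_gt_of_ne (fun h' => h (Fin.ext h') : j.val ≠ l.val) with h1 | h1
    · rw [← FK_card_eq m, ← Set.ncard_coe_finset]
      congr 1
      ext p
      simp [FKarc, h, h1, h1.le, h1.not_gt, Fin.lt_def, Fin.le_def]
    · rw [← FK_card_back m, ← Set.ncard_coe_finset]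
      congr 1
      ext p
      simp [FKarc, h, h1, h1.le, h1.not_gt, Fin.lt_def, Fin.le_def]

theorem FK_card (k m : ℕ) :
    (arcSet (FKarc k (m+3))).ncard
      = ∑ q : Fin k × Fin k, if q.1 = q.2 then m + 2 else m + 4 := by
  classical
  simp_rw [← FK_card_pair k m]
  let e : (Fin k × Fin (m+3)) × (Fin k × Fin (m+3)) ≃
      (_ : Fin k × Fin k) × (Fin (m+3) × Fin (m+3)) :=
    (Equiv.prodProdProdComm _ _ _ _).trans (Equiv.sigmaEquivProd _ _).symm
  have hs : ∀ q : Fin k × Fin k,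
      {p : Fin (m+3) × Fin (m+3) | FKarc k (m+3) (q.1, p.1) (q.2, p.2)}.ncard
      = (Finset.univ.filter fun p : Fin (m+3) × Fin (m+3) =>
          FKarc k (m+3) (q.1, p.1) (q.2, p.2)).card := by
    intro q
    rw [← Set.ncard_coe_finset]
    congr 1
    ext p
    simp
  simp_rw [hs]
  rw [← Finset.card_sigma, ← Set.ncard_coe_finset, ← Set.ncard_image_of_injective _ e.injective]
  congr 1
  ext ⟨⟨a, b⟩, ⟨c, d⟩⟩
  simp only [Set.mem_image_equiv, Finset.coe_sigma, Set.mem_sigma_iff, Finset.mem_coe,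
    Finset.mem_filter, Finset.mem_univ, true_and]
  rfl

theorem FK_sum (k m : ℕ) (hk : 2 ≤ k) :
    (∑ q : Fin k × Fin k, if q.1 = q.2 then m + 2 else m + 4)
      = k * (k * (m+3)) + k * (k - 2) := by
  obtain ⟨t, rfl⟩ := Nat.exists_eq_add_of_le hk
  rw [Fintype.sum_prod_type]
  have : ∀ j : Fin (2+t), (∑ l : Fin (2+t), if j = l then m + 2 else m + 4)
      = (2+t)*(m+3) + t := by
    intro j
    have h := Finset.add_sum_erase Finset.univ
      (fun l : Fin (2+t) => if j = l then m + 2 else m + 4) (Finset.mem_univ j)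
    rw [← h, Finset.sum_congr rfl (g := fun _ => m + 4)]
    · simp [Finset.card_erase_of_mem]
      ring
    · intro x hx
      have := Finset.ne_of_mem_erase hx
      simp [this.symm]
  simp only [this, Finset.sum_const, Finset.card_univ, Fintype.card_fin, smul_eq_mul]
  rw [show 2 + t - 2 = t by omega]
  ring

theorem FK_path (k n : ℕ) (v : Fin k × Fin n) (c : Fin k) (hc : c ≠ v.1) (a d : ℕ)
    (h : a + d < n) :
    Relation.ReflTransGen
      (fun x y => FKarc k n x y ∧ Function.update (fun w : Fin k × Fin n => w.1) v c x = c ∧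
        Function.update (fun w : Fin k × Fin n => w.1) v c y = c)
      (c, ⟨a, by omega⟩) (c, ⟨a + d, h⟩) := by
  have hne : ∀ i : Fin n, Function.update (fun w : Fin k × Fin n => w.1) v c (c, i) = c := by
    intro i
    rw [Function.update_of_ne]
    rintro rfl
    exact hc rfl
  induction d with
  | zero => exact Relation.ReflTransGen.refl
  | succ d ih =>
    exact (ih (by omega)).tail ⟨Or.inl ⟨rfl, by simp; omega⟩, hne _, hne _⟩

theorem FK_cycle (k n : ℕ) (v : Fin k × Fin n) (c : Fin k) (hc : c ≠ v.1) (a b : ℕ)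
    (hab : a ≤ b) (hb : b < n) (h1 : FKarc k n v (c, ⟨a, by omega⟩))
    (h2 : FKarc k n (c, ⟨b, hb⟩) v) :
    ¬ IsDicolouring (FKarc k n) k (Function.update (fun w => w.1) v c) := by
  intro H
  have hne : ∀ i : Fin n, Function.update (fun w : Fin k × Fin n => w.1) v c (c, i) = c := by
    intro i
    rw [Function.update_of_ne]
    rintro rfl
    exact hc rfl
  obtain ⟨d, rfl⟩ := Nat.exists_eq_add_of_le hab
  refine H c v ?_
  have hp := FK_path k n v c hc a d hb
  refine Relation.TransGen.tail' (Relation.ReflTransGen.head ?_ hp) ?_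
  · exact ⟨h1, by simp, hne _⟩
  · exact ⟨h2, hne _, by simp⟩

theorem FK_frozen (k n : ℕ) (hn : 3 ≤ n) :
    FrozenDicolouring (FKarc k n) k (fun v => v.1) := by
  constructor
  · intro c v hv
    have key : ∀ x y : Fin k × Fin n, Relation.TransGen
        (fun u v : Fin k × Fin n => FKarc k n u v ∧ u.1 = c ∧ v.1 = c) x y →
        x.2.val < y.2.val := by
      have step : ∀ x y : Fin k × Fin n, FKarc k n x y ∧ x.1 = c ∧ y.1 = c →
          x.2.val < y.2.val := by
        rintro x y ⟨h, h1, h2⟩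
        have : x.1.val = y.1.val := by rw [h1, h2]
        rcases h with h | h | h | h <;> omega
      intro x y h
      induction h with
      | single h => exact step _ _ h
      | tail _ h ih => exact ih.trans (step _ _ h)
    exact lt_irrefl _ (key v v hv)
  · rintro ⟨j, i, hi⟩ c hc
    have hc' : c.val ≠ j.val := fun h => hc (Fin.ext h)
    rcases lt_or_gt_of_ne hc' with h | h
    · by_cases h0 : i = 0
      · refine FK_cycle k n _ c hc 1 (n-1) (by omega) (by omega) ?_ ?_
        · exact Or.inr (Or.inr (Or.inl ⟨h, Or.inr (Or.inl ⟨h0, rfl⟩)⟩))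
        · exact Or.inr (Or.inr (Or.inr ⟨h, rfl, h0⟩))
      · refine FK_cycle k n _ c hc (i-1) i (by omega) hi ?_ ?_
        · exact Or.inr (Or.inr (Or.inl ⟨h, Or.inl (by simp; omega)⟩))
        · exact Or.inr (Or.inl ⟨h, rfl⟩)
    · by_cases h0 : i = n - 1
      · refine FK_cycle k n _ c hc 0 (n-2) (by omega) (by omega) ?_ ?_
        · exact Or.inr (Or.inr (Or.inr ⟨h, h0, rfl⟩))
        · exact Or.inr (Or.inr (Or.inl ⟨h, Or.inr (Or.inr ⟨rfl, h0⟩)⟩))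
      · refine FK_cycle k n _ c hc i (i+1) (by omega) (by omega) ?_ ?_
        · exact Or.inr (Or.inl ⟨h, rfl⟩)
        · exact Or.inr (Or.inr (Or.inl ⟨h, Or.inl rfl⟩))

theorem Fnk_freezable (k n : ℕ) (hk : 2 ≤ k) (hn : 3 ≤ n) :
    (arcSet (FKarc k n)).ncard = k * (k * n) + k * (k - 2) ∧
    FrozenDicolouring (FKarc k n) k (fun v => v.1) := by
  refine ⟨?_, FK_frozen k n hn⟩
  obtain ⟨m, rfl⟩ := Nat.exists_eq_add_of_le' hn
  rw [FK_card, FK_sum k m hk]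
end

section
/- Let G⃗ be an oriented graph and let s be a vertex of G⃗ that is a source (d⁻(s) = 0) or a sink (d⁺(s) = 0). If G⃗ − s is 2-mixing, then G⃗ is 2-mixing. -/
theorem isDicolouring_iff_restrict {V : Type} (D : V → V → Prop) (s : V) (k : ℕ)
    (hs : (∀ w, ¬ D w s) ∨ (∀ w, ¬ D s w)) (α : V → Fin k) :
    IsDicolouring D k α ↔
      IsDicolouring (fun a b : {v : V // v ≠ s} => D a.1 b.1) k (fun a => α a.1) := by
  constructor
  · intro h c v hv
    exact h c v.1 (Relation.TransGen.lift Subtype.val (fun _ _ hab => hab) _ _ hv)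
  · intro h c v hv
    have hvs : v ≠ s := by
      rintro rfl
      rcases hs with hs | hs
      · obtain ⟨w, _, hw⟩ := Relation.TransGen.tail'_iff.1 hv
        exact hs w hw.1
      · obtain ⟨w, hw, _⟩ := Relation.TransGen.head'_iff.1 hv
        exact hs w hw.1
    rcases hs with hs | hs
    · have key : ∀ b, Relation.TransGen (fun u v => D u v ∧ α u = c ∧ α v = c) v b →
          ∃ hb : b ≠ s, Relation.TransGen
            (fun a b : {v : V // v ≠ s} => D a.1 b.1 ∧ α a.1 = c ∧ α b.1 = c)
            ⟨v, hvs⟩ ⟨b, hb⟩ := by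
        intro b hb
        induction hb with
        | single h1 => exact ⟨fun e => hs _ (e ▸ h1.1), .single h1⟩
        | tail _ h1 ih =>
          obtain ⟨_, h2⟩ := ih
          exact ⟨fun e => hs _ (e ▸ h1.1), h2.tail h1⟩
      exact h c _ (key v hv).2
    · have key : ∀ b, Relation.TransGen (fun u v => D u v ∧ α u = c ∧ α v = c) b v →
          ∃ hb : b ≠ s, Relation.TransGen
            (fun a b : {v : V // v ≠ s} => D a.1 b.1 ∧ α a.1 = c ∧ α b.1 = c)
            ⟨b, hb⟩ ⟨v, hvs⟩ := by
        intro b hb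
        induction hb using Relation.TransGen.head_induction_on with
        | single h1 => exact ⟨fun e => hs _ (e ▸ h1.1), .single h1⟩
        | head h1 _ ih =>
          obtain ⟨_, h2⟩ := ih
          exact ⟨fun e => hs _ (e ▸ h1.1), Relation.TransGen.head h1 h2⟩
      exact h c _ (key v hv).2

/-- If `s` is a source or a sink of an oriented graph `G⃗` and `G⃗ - s` is
`2`-mixing, then `G⃗` is `2`-mixing. -/
theorem source_or_sink_mixing {V : Type} [Fintype V] (D : V → V → Prop)
    (horiented : Oriented D) (s : V)
    (hs : inDegOn D Set.univ s = 0 ∨ outDegOn D Set.univ s = 0)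
    (hmix : Mixing (fun a b : {v : V // v ≠ s} => D a.1 b.1) 2) :
    Mixing D 2 := by
  classical
  have hs' : (∀ w, ¬ D w s) ∨ (∀ w, ¬ D s w) := by
    refine hs.imp (fun h w hw => ?_) (fun h w hw => ?_)
    · rw [inDegOn, Set.ncard_eq_zero] at h
      exact (Set.ext_iff.1 h w).1 ⟨trivial, hw⟩
    · rw [outDegOn, Set.ncard_eq_zero] at h
      exact (Set.ext_iff.1 h w).1 ⟨trivial, hw⟩
  have hiff := isDicolouring_iff_restrict D s 2 hs'
  intro α β hα hβ
  have hpath := hmix _ _ ((hiff α).1 hα) ((hiff β).1 hβ)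
  let ext : ({v : V // v ≠ s} → Fin 2) → V → Fin 2 :=
    fun γ v => if h : v ≠ s then γ ⟨v, h⟩ else α s
  have hext : ∀ γ, (fun a : {v : V // v ≠ s} => ext γ a.1) = γ := by
    intro γ
    funext a
    simp [ext, a.2]
  have h1 := Relation.ReflTransGen.lift (p := RecolStep D 2)
    (r := RecolStep (fun a b : {v : V // v ≠ s} => D a.1 b.1) 2) ext (by
    rintro γ δ ⟨hγ, hδ, v, hv, hw⟩
    refine ⟨(hiff _).2 (by rw [hext]; exact hγ), (hiff _).2 (by rw [hext]; exact hδ), v.1, ?_, ?_⟩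
    · simpa [ext, v.2] using hv
    · intro w hwv
      by_cases h : w = s
      · simp [ext, h]
      · simpa [ext, h] using hw ⟨w, h⟩ (fun e => hwv (congrArg Subtype.val e))) _ _ hpath
  have e1 : ext (fun a => α a.1) = α := by
    funext v
    by_cases h : v = s <;> simp [ext, h]
  rw [Function.onFun, e1] at h1
  by_cases hc : α s = β s
  · have e2 : ext (fun a => β a.1) = β := by
      funext v
      by_cases h : v = s <;> simp [ext, h, hc]
    rwa [e2] at h1
  · refine h1.tail ⟨(hiff _).2 (by rw [hext (fun a => β a.1)]; exact (hiff β).1 hβ), hβ, s, ?_, ?_⟩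
    · simpa [ext] using hc
    · intro w hw
      simp [ext, hw]
end

section
/- Let G⃗ be an oriented graph and let u be a vertex of G⃗ with d⁺(u) = d⁻(u) = 1. If G⃗ − u is 2-mixing, then G⃗ is 2-mixing. -/
theorem aux_out {V : Type} (r : V → V → Prop) (u : V) (h : ∀ x y, r x y → x ≠ u) {x y : V}
    (hxy : Relation.TransGen r x y) (hy : y ≠ u) :
    ∃ hx : x ≠ u, Relation.TransGen (fun p q : {v : V // v ≠ u} => r p.1 q.1) ⟨x, hx⟩ ⟨y, hy⟩ := by
  induction hxy using Relation.TransGen.head_induction_on with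
  | single hab => exact ⟨h _ _ hab, .single hab⟩
  | head hab _ ih =>
    obtain ⟨h1, h2⟩ := ih
    exact ⟨h _ _ hab, .head (b := ⟨_, h1⟩) hab h2⟩

theorem aux_in {V : Type} (r : V → V → Prop) (u : V) (h : ∀ x y, r x y → y ≠ u) {x y : V}
    (hxy : Relation.TransGen r x y) (hx : x ≠ u) :
    ∃ hy : y ≠ u, Relation.TransGen (fun p q : {v : V // v ≠ u} => r p.1 q.1) ⟨x, hx⟩ ⟨y, hy⟩ := by
  induction hxy with
  | single hab => exact ⟨h _ _ hab, .single hab⟩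
  | tail _ hab ih =>
    obtain ⟨h1, h2⟩ := ih
    exact ⟨h _ _ hab, .tail (b := ⟨_, h1⟩) h2 hab⟩

theorem aux_acyc {V : Type} (r : V → V → Prop) (u : V)
    (h : (∀ x y, r x y → x ≠ u) ∨ (∀ x y, r x y → y ≠ u))
    (hr : RelAcyclic (fun p q : {v : V // v ≠ u} => r p.1 q.1)) : RelAcyclic r := by
  intro v hv
  rcases h with h | h
  · have hvu : v ≠ u := by
      obtain ⟨w, hw, _⟩ := Relation.TransGen.head'_iff.1 hv
      exact h _ _ hw
    obtain ⟨_, h2⟩ := aux_out r u h hv hvu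
    exact hr _ h2
  · have hvu : v ≠ u := by
      obtain ⟨w, _, hw⟩ := Relation.TransGen.tail'_iff.1 hv
      exact h _ _ hw
    obtain ⟨_, h2⟩ := aux_in r u h hv hvu
    exact hr _ h2

open Classical in
noncomputable def extCol {V : Type} (u : V) (γ : {v : V // v ≠ u} → Fin 2) (x : Fin 2) : V → Fin 2 :=
  fun v => if h : v = u then x else γ ⟨v, h⟩

theorem extCol_self {V : Type} (u : V) (γ : {v : V // v ≠ u} → Fin 2) (x : Fin 2) :
    extCol u γ x u = x := by simp [extCol]

theorem extCol_ne {V : Type} (u : V) (γ : {v : V // v ≠ u} → Fin 2) (x : Fin 2) (v : V)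
    (h : v ≠ u) : extCol u γ x v = γ ⟨v, h⟩ := by simp [extCol, h]

theorem extCol_restrict {V : Type} (u : V) (α : V → Fin 2) :
    extCol u (fun v => α v.1) (α u) = α := by
  funext v
  by_cases h : v = u
  · subst h; simp [extCol]
  · simp [extCol, h]

theorem restrict_dicol {V : Type} (D : V → V → Prop) (u : V) (α : V → Fin 2)
    (h : IsDicolouring D 2 α) :
    IsDicolouring (fun a b : {v : V // v ≠ u} => D a.1 b.1) 2 (fun v => α v.1) := by
  intro c v hv
  exact h c v.1 (Relation.TransGen.lift (fun p : {v : V // v ≠ u} => p.1) (fun _ _ h => h) _ _ hv)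

theorem extCol_dicol {V : Type} (D : V → V → Prop) (u a b : V) (ha : a ≠ u) (hb : b ≠ u)
    (hau : ∀ w, D w u → w = a) (hub : ∀ w, D u w → w = b)
    (γ : {v : V // v ≠ u} → Fin 2) (x : Fin 2)
    (hγ : IsDicolouring (fun a b : {v : V // v ≠ u} => D a.1 b.1) 2 γ)
    (h : ¬ (γ ⟨a, ha⟩ = x ∧ γ ⟨b, hb⟩ = x)) : IsDicolouring D 2 (extCol u γ x) := by
  intro c
  apply aux_acyc _ u
  · by_cases hbx : γ ⟨b, hb⟩ = x
    · right
      rintro p q ⟨h1, h2, h3⟩ rfl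
      have := hau _ h1
      subst this
      rw [extCol_self] at h3
      rw [extCol_ne _ _ _ _ ha] at h2
      exact h ⟨h2.trans h3.symm, hbx⟩
    · left
      rintro p q ⟨h1, h2, h3⟩ rfl
      have := hub _ h1
      subst this
      rw [extCol_self] at h2
      rw [extCol_ne _ _ _ _ hb] at h3
      exact hbx (h3.trans h2.symm)
  · have := hγ c
    convert this using 5 with p q
    · rw [extCol_ne _ _ _ _ p.2]
    · rw [extCol_ne _ _ _ _ q.2]

theorem step_u {V : Type} (D : V → V → Prop) (u : V)
    (γ : {v : V // v ≠ u} → Fin 2) (x y : Fin 2)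
    (h1 : IsDicolouring D 2 (extCol u γ x)) (h2 : IsDicolouring D 2 (extCol u γ y)) :
    Relation.ReflTransGen (RecolStep D 2) (extCol u γ x) (extCol u γ y) := by
  by_cases hxy : x = y
  · subst hxy; exact .refl
  · refine .single ⟨h1, h2, u, ?_, ?_⟩
    · simpa [extCol_self] using hxy
    · intro w hw
      simp [extCol_ne, hw]

theorem step_v {V : Type} (D : V → V → Prop) (u : V)
    (γ γ' : {v : V // v ≠ u} → Fin 2) (x : Fin 2) (hadj : RecolAdj γ γ')
    (h1 : IsDicolouring D 2 (extCol u γ x)) (h2 : IsDicolouring D 2 (extCol u γ' x)) :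
    Relation.ReflTransGen (RecolStep D 2) (extCol u γ x) (extCol u γ' x) := by
  obtain ⟨v, hv, hw⟩ := hadj
  refine .single ⟨h1, h2, v.1, ?_, ?_⟩
  · simpa [extCol_ne _ _ _ _ v.2] using hv
  · intro w hwv
    by_cases hwu : w = u
    · subst hwu; simp [extCol_self]
    · rw [extCol_ne _ _ _ _ hwu, extCol_ne _ _ _ _ hwu]
      exact hw _ (fun h => hwv (congrArg Subtype.val h))

/-- If `u` is a vertex of an oriented graph `G⃗` with `d⁺(u) = d⁻(u) = 1` and
`G⃗ - u` is `2`-mixing, then `G⃗` is `2`-mixing. -/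
theorem degree_two_vertex_mixing {V : Type} [Fintype V] (D : V → V → Prop)
    (horiented : Oriented D) (u : V)
    (hout : outDegOn D Set.univ u = 1) (hin : inDegOn D Set.univ u = 1)
    (hmix : Mixing (fun a b : {v : V // v ≠ u} => D a.1 b.1) 2) :
    Mixing D 2 := by
  obtain ⟨b, hb⟩ := Set.ncard_eq_one.1 hout
  obtain ⟨a, ha⟩ := Set.ncard_eq_one.1 hin
  have hub : ∀ w, D u w ↔ w = b := fun w => by
    simpa using Set.ext_iff.1 hb w
  have hau : ∀ w, D w u ↔ w = a := fun w => by
    simpa using Set.ext_iff.1 ha w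
  have hDb : D u b := (hub b).2 rfl
  have hDa : D a u := (hau a).2 rfl
  have hau' : a ≠ u := by rintro rfl; exact horiented _ _ hDa hDa
  have hbu' : b ≠ u := by rintro rfl; exact horiented _ _ hDb hDb
  have hab : a ≠ b := by rintro rfl; exact horiented _ _ hDa hDb
  have key := extCol_dicol D u a b hau' hbu' (fun w => (hau w).1) (fun w => (hub w).1)
  intro α β hα hβ
  have hpath := hmix _ _ (restrict_dicol D u α hα) (restrict_dicol D u β hβ)
  have main : ∀ γ, Relation.ReflTransGen
      (RecolStep (fun a b : {v : V // v ≠ u} => D a.1 b.1) 2) (fun v => α v.1) γ →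
      ∃ x, IsDicolouring D 2 (extCol u γ x) ∧
        Relation.ReflTransGen (RecolStep D 2) α (extCol u γ x) := by
    intro γ hγ
    induction hγ with
    | refl => exact ⟨α u, by rw [extCol_restrict]; exact hα, by rw [extCol_restrict]⟩
    | @tail γ γ' _ hstep ih =>
      obtain ⟨x, hx, hp⟩ := ih
      obtain ⟨hd, hd', hadj⟩ := hstep
      by_cases hc : γ' ⟨a, hau'⟩ = x ∧ γ' ⟨b, hbu'⟩ = x
      · obtain ⟨y, hy⟩ : ∃ y : Fin 2, y ≠ x := exists_ne x
        have h1 : IsDicolouring D 2 (extCol u γ y) := by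
          apply key _ _ hd
          rintro ⟨ea, eb⟩
          obtain ⟨v, _, hw⟩ := hadj
          have e1 : (⟨a, hau'⟩ : {v : V // v ≠ u}) = v := by
            by_contra hne
            exact hy (ea.symm.trans ((hw _ hne).trans hc.1))
          have e2 : (⟨b, hbu'⟩ : {v : V // v ≠ u}) = v := by
            by_contra hne
            exact hy (eb.symm.trans ((hw _ hne).trans hc.2))
          exact hab (congrArg Subtype.val (e1.trans e2.symm))
        have h2 : IsDicolouring D 2 (extCol u γ' y) := by
          apply key _ _ hd'
          rintro ⟨ea, _⟩
          exact hy (ea.symm.trans hc.1)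
        exact ⟨y, h2, (hp.trans (step_u D u γ x y hx h1)).trans (step_v D u γ γ' y hadj h1 h2)⟩
      · have h2 := key _ _ hd' hc
        exact ⟨x, h2, hp.trans (step_v D u γ γ' x hadj hx h2)⟩
  obtain ⟨x, hx, hp⟩ := main _ hpath
  have hf := step_u D u (fun v => β v.1) x (β u) hx (by rw [extCol_restrict]; exact hβ)
  rw [extCol_restrict] at hf
  exact hp.trans hf
end

section
/- Let k ≥ 1 and let D be a digraph that is not k-mixing. Then D contains a nonempty subdigraph H with minimum out-degree at least k−1 and minimum in-degree at least k−1; in particular, Mad(D) ≥ 2k − 2. -/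
def ROn {V : Type} (D : V → V → Prop) (S : Set V) : V → V → Prop :=
  fun u v => D u v ∧ u ∈ S ∧ v ∈ S

theorem dicol_congr {V : Type} {D : V → V → Prop} {S T : Set V} {k : ℕ} {α β : V → Fin k}
    (hST : T ⊆ S) (h : ∀ v ∈ T, α v = β v) (ha : IsDicolouring (ROn D S) k α) :
    IsDicolouring (ROn D T) k β := by
  intro c v hv
  apply ha c v
  refine Relation.TransGen.mono ?_ _ _ hv
  rintro a b ⟨⟨h1, h2, h3⟩, h4, h5⟩
  exact ⟨⟨h1, hST h2, hST h3⟩, (h a h2).trans h4, (h b h3).trans h5⟩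

theorem dicol_out {V : Type} {D : V → V → Prop} {S : Set V} {k : ℕ} {α : V → Fin k} (v : V)
    (h : ∀ w, w ∈ S → D v w → α w ≠ α v) (ha : IsDicolouring (ROn D (S \ {v})) k α) :
    IsDicolouring (ROn D S) k α := by
  intro c x hx
  have key : ∀ a b, (ROn D S a b ∧ α a = c ∧ α b = c) → a ≠ v := by
    rintro a b ⟨⟨h1, h2, h3⟩, h4, h5⟩ rfl
    exact h b h3 h1 (h5.trans h4.symm)
  have main : ∀ y, Relation.TransGen (fun u v => ROn D S u v ∧ α u = c ∧ α v = c) x y → y ≠ v →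
      Relation.TransGen (fun u w => ROn D (S \ {v}) u w ∧ α u = c ∧ α w = c) x y := by
    intro y hy
    induction hy with
    | single hab =>
      intro hb
      exact .single ⟨⟨hab.1.1, ⟨hab.1.2.1, key _ _ hab⟩, ⟨hab.1.2.2, hb⟩⟩, hab.2⟩
    | tail _ hab ih =>
      intro hb
      exact .tail (ih (key _ _ hab)) ⟨⟨hab.1.1, ⟨hab.1.2.1, key _ _ hab⟩, ⟨hab.1.2.2, hb⟩⟩, hab.2⟩
  obtain ⟨b, hb, -⟩ := Relation.TransGen.head'_iff.1 hx
  exact ha c x (main x hx (key _ _ hb))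

theorem dicol_swap {V : Type} {D : V → V → Prop} {S : Set V} {k : ℕ} {α : V → Fin k}
    (ha : IsDicolouring (ROn D S) k α) : IsDicolouring (ROn (fun a b => D b a) S) k α := by
  intro c x hx
  apply ha c x
  rw [← Relation.transGen_swap]
  refine Relation.TransGen.mono ?_ _ _ hx
  rintro a b ⟨⟨h1, h2, h3⟩, h4, h5⟩
  exact ⟨⟨h1, h3, h2⟩, h5, h4⟩

theorem dicol_in {V : Type} {D : V → V → Prop} {S : Set V} {k : ℕ} {α : V → Fin k} (v : V)
    (h : ∀ w, w ∈ S → D w v → α w ≠ α v) (ha : IsDicolouring (ROn D (S \ {v})) k α) :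
    IsDicolouring (ROn D S) k α :=
  dicol_swap (D := fun a b => D b a) (dicol_out v h (dicol_swap ha))

open Classical in
theorem reach_update {V : Type} {D : V → V → Prop} {k : ℕ} {α : V → Fin k} (v : V) (c : Fin k)
    (ha : IsDicolouring D k α) (hb : IsDicolouring D k (Function.update α v c)) :
    Relation.ReflTransGen (RecolStep D k) α (Function.update α v c) := by
  by_cases h : α v = c
  · subst h; simp only [Function.update_eq_self]; exact .refl
  · refine .single ⟨ha, hb, v, by simpa using h, ?_⟩
    intro w hw
    simp [hw]

open Classical in
theorem lift_step {V : Type} [Fintype V] {D : V → V → Prop} {k : ℕ} {S : Set V} {v : V}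
    {N : Set V} (hN : N.ncard < k - 1) (hvN : v ∉ N)
    (hext : ∀ α : V → Fin k, (∀ w ∈ N, α w ≠ α v) → IsDicolouring (ROn D (S \ {v})) k α →
      IsDicolouring (ROn D S) k α)
    {γ δ γ' : V → Fin k} (hs : RecolStep (ROn D (S \ {v})) k γ δ)
    (hγ' : IsDicolouring (ROn D S) k γ') (hag : ∀ x ∈ S \ {v}, γ' x = γ x) :
    ∃ δ', IsDicolouring (ROn D S) k δ' ∧ (∀ x ∈ S \ {v}, δ' x = δ x) ∧
      Relation.ReflTransGen (RecolStep (ROn D S) k) γ' δ' := by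
  obtain ⟨hg, hd, w, hw, hrest⟩ := hs
  by_cases hwT : w ∈ S \ {v}
  swap
  · refine ⟨γ', hγ', ?_, .refl⟩
    intro x hx
    rw [hag x hx]
    apply hrest
    rintro rfl
    exact hwT hx
  have hwv : w ≠ v := hwT.2
  obtain ⟨c', hc'⟩ : ∃ c', c' ∉ insert (δ w) (γ' '' N) := by
    by_contra hcon
    push Not at hcon
    have h1 : insert (δ w) (γ' '' N) = Set.univ := Set.eq_univ_of_forall hcon
    have h2 := Set.ncard_insert_le (δ w) (γ' '' N)
    have h3 := Set.ncard_image_le (f := γ') (Set.toFinite N)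
    rw [h1, Set.ncard_univ, Nat.card_eq_fintype_card, Fintype.card_fin] at h2
    omega
  have hc1 : c' ≠ δ w := fun h => hc' (Set.mem_insert_iff.2 (Or.inl h))
  have hc2 : ∀ x ∈ N, γ' x ≠ c' := fun x hx h => hc' (Set.mem_insert_iff.2 (Or.inr ⟨x, hx, h⟩))
  have hg2 : IsDicolouring (ROn D S) k (Function.update γ' v c') := by
    apply hext
    · intro x hx
      have : x ≠ v := fun h => hvN (h ▸ hx)
      simpa [this] using hc2 x hx
    · refine dicol_congr Set.sdiff_subset ?_ hγ'
      intro x hx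
      have : x ≠ v := hx.2
      simp [this]
  have hagd : ∀ x ∈ S \ {v}, Function.update (Function.update γ' v c') w (δ w) x = δ x := by
    intro x hx
    have hxv : x ≠ v := hx.2
    by_cases hxw : x = w
    · subst hxw; simp
    · simp [hxw, hxv, hag x hx, hrest x hxw]
  have hd2 : IsDicolouring (ROn D S) k (Function.update (Function.update γ' v c') w (δ w)) := by
    apply hext
    · intro x hx
      have hxv : x ≠ v := fun h => hvN (h ▸ hx)
      by_cases hxw : x = w
      · subst hxw; simpa [hxv.symm] using hc1.symm
      · simpa [hxv, hxw, hwv.symm] using hc2 x hx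
    · exact dicol_congr subset_rfl (fun x hx => (hagd x hx).symm) hd
  exact ⟨_, hd2, hagd, (reach_update v c' hγ' hg2).trans (reach_update w (δ w) hg2 hd2)⟩

theorem lift_walk {V : Type} [Fintype V] {D : V → V → Prop} {k : ℕ} {S : Set V} {v : V}
    {N : Set V} (hN : N.ncard < k - 1) (hvN : v ∉ N)
    (hext : ∀ α : V → Fin k, (∀ w ∈ N, α w ≠ α v) → IsDicolouring (ROn D (S \ {v})) k α →
      IsDicolouring (ROn D S) k α)
    {γ δ : V → Fin k} (hs : Relation.ReflTransGen (RecolStep (ROn D (S \ {v})) k) γ δ)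
    (hγ : IsDicolouring (ROn D S) k γ) :
    ∃ δ', IsDicolouring (ROn D S) k δ' ∧ (∀ x ∈ S \ {v}, δ' x = δ x) ∧
      Relation.ReflTransGen (RecolStep (ROn D S) k) γ δ' := by
  induction hs with
  | refl => exact ⟨γ, hγ, fun _ _ => rfl, .refl⟩
  | tail _ hbc ih =>
    obtain ⟨b', h1, h2, h3⟩ := ih
    obtain ⟨c', h4, h5, h6⟩ := lift_step hN hvN hext hbc h1 h2
    exact ⟨c', h4, h5, h3.trans h6⟩

open Classical in
theorem mix_on {V : Type} [Fintype V] (D : V → V → Prop)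
    (hloopless : Irreflexive D) (k : ℕ)
    (hdeg : ∀ S : Set V, S.Nonempty → ∃ v ∈ S, outDegOn D S v < k - 1 ∨ inDegOn D S v < k - 1) :
    ∀ (n : ℕ) (S : Set V), S.ncard = n → ∀ α β : V → Fin k, IsDicolouring (ROn D S) k α →
      IsDicolouring (ROn D S) k β → ∃ β', (∀ x ∈ S, β' x = β x) ∧
        Relation.ReflTransGen (RecolStep (ROn D S) k) α β' := by
  intro n
  induction n with
  | zero =>
    intro S hS α β ha hb
    rw [Set.ncard_eq_zero] at hS
    subst hS
    exact ⟨α, by simp, .refl⟩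
  | succ n ih =>
    intro S hS α β ha hb
    have hne : S.Nonempty := by
      rw [← Set.ncard_pos]; omega
    obtain ⟨v, hv, hd⟩ := hdeg S hne
    have hT : (S \ {v}).ncard = n := by
      rw [Set.ncard_sdiff_singleton_of_mem hv]; omega
    obtain ⟨β₁, hβ₁, hr⟩ := ih _ hT α β (dicol_congr Set.sdiff_subset (fun _ _ => rfl) ha)
      (dicol_congr Set.sdiff_subset (fun _ _ => rfl) hb)
    have : ∃ δ', IsDicolouring (ROn D S) k δ' ∧ (∀ x ∈ S \ {v}, δ' x = β₁ x) ∧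
      Relation.ReflTransGen (RecolStep (ROn D S) k) α δ' := by
      rcases hd with hd | hd
      · exact lift_walk (N := {w ∈ S | D v w}) hd (fun h => hloopless v h.2)
          (fun α h => dicol_out v (fun w h1 h2 => h w ⟨h1, h2⟩)) hr ha
      · exact lift_walk (N := {w ∈ S | D w v}) hd (fun h => hloopless v h.2)
          (fun α h => dicol_in v (fun w h1 h2 => h w ⟨h1, h2⟩)) hr ha
    obtain ⟨δ', h1, h2, h3⟩ := this
    have hag : ∀ x ∈ S, Function.update δ' v (β v) x = β x := by
      intro x hx
      by_cases hxv : x = v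
      · subst hxv; simp
      · have hx' : x ∈ S \ {v} := ⟨hx, hxv⟩
        simp [hxv, h2 x hx', hβ₁ x hx']
    exact ⟨_, hag, h3.trans (reach_update v (β v) h1
      (dicol_congr subset_rfl (fun x hx => (hag x hx).symm) hb))⟩

open Classical in
theorem arc_count {V : Type} [Fintype V] (D : V → V → Prop) (S : Set V) (m : ℕ)
    (h : ∀ v ∈ S, m ≤ outDegOn D S v) : m * S.ncard ≤ (arcSetOn D S).ncard := by
  rw [Set.ncard_eq_toFinset_card' S, Set.ncard_eq_toFinset_card' (arcSetOn D S)]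
  rw [Finset.card_eq_sum_card_fiberwise (f := Prod.fst) (t := S.toFinset)
    (by intro p hp; simp at hp ⊢; exact hp.1), mul_comm, ← smul_eq_mul]
  apply Finset.card_nsmul_le_sum
  intro v hv
  have hv' : v ∈ S := by simpa using hv
  refine (h v hv').trans ?_
  unfold outDegOn
  rw [Set.ncard_eq_toFinset_card']
  apply Finset.card_le_card_of_injOn (fun w => (v, w))
  · intro w hw
    simp at hw
    simp only [Finset.coe_filter, Set.mem_setOf_eq, Set.mem_toFinset, and_true]
    exact ⟨hv', hw.1, hw.2⟩
  · intro a _ b _ hab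
    exact (Prod.mk.inj hab).2

/-- If `D` is not `k`-mixing (`k ≥ 1`), then `D` contains a nonempty (induced)
subdigraph with minimum out-degree and minimum in-degree at least `k - 1`;
in particular `Mad(D) ≥ 2k - 2`, i.e. `|A(H)| ≥ (k - 1) |V(H)|` for this
subdigraph. -/
theorem not_mixing_dense_subdigraph {V : Type} [Fintype V] (D : V → V → Prop)
    (hloopless : Irreflexive D) (k : ℕ) (hk : 1 ≤ k) (hnotmixing : ¬ Mixing D k) :
    ∃ S : Set V, S.Nonempty ∧
      (∀ v ∈ S, k - 1 ≤ outDegOn D S v ∧ k - 1 ≤ inDegOn D S v) ∧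
      (k - 1) * S.ncard ≤ (arcSetOn D S).ncard := by
  by_contra hcon
  apply hnotmixing
  have hdeg : ∀ S : Set V, S.Nonempty →
      ∃ v ∈ S, outDegOn D S v < k - 1 ∨ inDegOn D S v < k - 1 := by
    intro S hS
    by_contra h
    push Not at h
    exact hcon ⟨S, hS, h, arc_count D S _ (fun v hv => (h v hv).1)⟩
  have hU : ROn D Set.univ = D := by
    funext a b; simp [ROn]
  intro α β ha hb
  obtain ⟨β', h1, h2⟩ := mix_on D hloopless k hdeg _ Set.univ rfl α β (by rwa [hU]) (by rwa [hU])
  have : β' = β := funext fun x => h1 x trivial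
  rw [hU, this] at h2
  exact h2
end
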